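/- arXiv:math/0204120 — 5 statements merged into one kernel-verified Lean document; each statement's English description precedes it below -/
import Mathlib

section
/- For an abelian group G, the space G^# is paracompact if and only if G is countable. -/
open scoped Pointwise

/-- The Bohr topology on an abelian group `G`: the initial topology induced by the
family of all group homomorphisms from `G` to the circle group `ℝ/ℤ`. -/
noncomputable def bohrTopology (G : Type*) [AddCommGroup G] : TopologicalSpace G :=
  ⨅ χ : G →+ AddCircle (1 : ℝ), TopologicalSpace.induced χ inferInstance

set_option linter.style.haveILetI false

open Set Filter Topology MeasureTheory

/-- Characters extend along injective homomorphisms. -/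
theorem bohr_extend {A B : Type*} [AddCommGroup A] [AddCommGroup B] (f : A →+ B)
    (hf : Function.Injective f) (φ : A →+ AddCircle (1 : ℝ)) :
    ∃ χ : B →+ AddCircle (1 : ℝ), ∀ a, χ (f a) = φ a := by
  obtain ⟨χ, hχ⟩ := (Module.Baer.of_divisible (AddCircle (1 : ℝ))).extension_property_addMonoidHom
    f hf φ
  exact ⟨χ, fun a => DFunLike.congr_fun hχ a⟩

/-- The inclusion of the rational circle in the real circle. -/
noncomputable def bohrRatCircle : AddCircle (1 : ℚ) →+ AddCircle (1 : ℝ) :=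
  QuotientAddGroup.map _ _ (Rat.castHom ℝ).toAddMonoidHom (by
    intro x hx
    obtain ⟨n, rfl⟩ := AddSubgroup.mem_zmultiples_iff.1 hx
    exact AddSubgroup.mem_zmultiples_iff.2 ⟨n, by simp⟩)

theorem bohrRatCircle_injective : Function.Injective bohrRatCircle := by
  rw [injective_iff_map_eq_zero]
  intro x
  induction x using QuotientAddGroup.induction_on with
  | H q =>
    intro h
    have h' : ((q : ℝ) : AddCircle (1 : ℝ)) = 0 := h
    rw [AddCircle.coe_eq_zero_iff] at h'
    obtain ⟨n, hn⟩ := h'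
    refine (AddCircle.coe_eq_zero_iff (1 : ℚ)).2 ⟨n, ?_⟩
    have : ((n : ℚ) : ℝ) = (q : ℝ) := by simpa using hn
    simpa using (Rat.cast_injective this)

theorem bohr_separate {A : Type*} [AddCommGroup A] {a : A} (ha : a ≠ 0) :
    ∃ χ : A →+ AddCircle (1 : ℝ), χ a ≠ 0 := by
  obtain ⟨c, hc⟩ := CharacterModule.exists_character_apply_ne_zero_of_ne_zero ha
  refine ⟨bohrRatCircle.comp (show A →+ AddCircle (1 : ℚ) from c), fun h => hc ?_⟩
  apply bohrRatCircle_injective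
  rw [map_zero]
  exact h

theorem bohr_continuous {G : Type*} [AddCommGroup G] (χ : G →+ AddCircle (1 : ℝ)) :
    @Continuous _ _ (bohrTopology G) _ χ := by
  letI := bohrTopology G
  exact continuous_iff_le_induced.2 (iInf_le _ χ)

/-- Basis vectors of a direct sum form a closed discrete set. -/
theorem bohr_discrete {G A ι : Type*} [AddCommGroup G] [AddCommGroup A] (a : A) (ha : a ≠ 0)
    (f : (ι →₀ A) →+ G) (hf : Function.Injective f) (x : G) :
    ∃ U : Set G, @IsOpen _ (bohrTopology G) U ∧ x ∈ U ∧
      {i | f (Finsupp.single i a) ∈ U}.Finite := by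
  classical
  letI := bohrTopology G
  by_cases hx : x ∈ f.range
  · obtain ⟨y, rfl⟩ := hx
    obtain ⟨ψ, hψ⟩ := bohr_separate ha
    obtain ⟨χ, hχ⟩ := bohr_extend f hf
      (Finsupp.liftAddHom (fun i => if i ∈ y.support then 0 else ψ))
    refine ⟨χ ⁻¹' {ψ a}ᶜ, isOpen_compl_singleton.preimage (bohr_continuous χ), ?_, ?_⟩
    · have : χ (f y) = 0 := by
        rw [hχ, Finsupp.liftAddHom_apply, Finsupp.sum]
        refine Finset.sum_eq_zero fun i hi => ?_
        rw [if_pos hi]; rfl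
      simp only [mem_preimage, mem_compl_iff, mem_singleton_iff, this]
      exact fun h => hψ h.symm
    · refine y.support.finite_toSet.subset fun i hi => ?_
      by_contra hn
      apply hi
      have hn' : i ∉ y.support := hn
      rw [hχ, Finsupp.liftAddHom_apply_single, if_neg hn']
      rfl
  · have : (QuotientAddGroup.mk x : G ⧸ f.range) ≠ 0 := by
      rwa [Ne, QuotientAddGroup.eq_zero_iff]
    obtain ⟨ψ, hψ⟩ := bohr_separate this
    let χ := ψ.comp (QuotientAddGroup.mk' f.range)
    refine ⟨χ ⁻¹' {0}ᶜ, isOpen_compl_singleton.preimage (bohr_continuous χ), hψ, ?_⟩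
    convert Set.finite_empty
    ext i
    simp only [mem_ofPred_eq, mem_preimage, mem_compl_iff, mem_singleton_iff, mem_empty_iff_false,
      iff_false, not_not]
    have : (QuotientAddGroup.mk (f (Finsupp.single i a)) : G ⧸ f.range) = 0 := by
      rw [QuotientAddGroup.eq_zero_iff]; exact ⟨_, rfl⟩
    change ψ (QuotientAddGroup.mk (f (Finsupp.single i a)) : G ⧸ f.range) = 0
    rw [this, map_zero]

/-- A family of fibres with countable kernel and countable image has countable domain. -/
theorem bohr_countable_of_ker {A B : Type*} [AddCommGroup A] [AddCommGroup B] (f : A →+ B)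
    [Countable f.ker] [Countable B] : Countable A := by
  have : ∀ b : B, (f ⁻¹' {b}).Countable := by
    intro b
    by_cases h : ∃ a, f a = b
    · obtain ⟨a, rfl⟩ := h
      have hc : ((fun k => a + k) '' (f.ker : Set A)).Countable :=
        (Set.to_countable (f.ker : Set A)).image _
      refine hc.mono ?_
      intro y hy
      have hy' : f y = f a := hy
      refine ⟨y - a, ?_, by simp⟩
      simp [AddMonoidHom.mem_ker, hy']
    · convert Set.countable_empty
      ext y
      simp only [mem_preimage, mem_singleton_iff, mem_empty_iff_false, iff_false]
      exact fun hy => h ⟨y, hy⟩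
  rw [← Set.countable_univ_iff]
  have h2 := Set.countable_iUnion this
  refine h2.mono fun y _ => mem_iUnion.2 ⟨f y, rfl⟩

/-- If all prime torsion is countable, all torsion is. -/
theorem bohr_torsion_countable {G : Type*} [AddCommGroup G]
    (h : ∀ p : ℕ, p.Prime → {g : G | p • g = 0}.Countable) :
    ∀ n : ℕ, n ≠ 0 → {g : G | n • g = 0}.Countable := by
  intro n
  induction n using induction_on_primes with
  | zero => exact fun h => (h rfl).elim
  | one => intro _; simp
  | prime_mul p m hp ih =>
    intro hn
    have hm := ih (by rintro rfl; simp at hn)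
    let K : AddSubgroup G := (nsmulAddMonoidHom (α := G) (p * m)).ker
    let L : AddSubgroup G := (nsmulAddMonoidHom (α := G) m).ker
    let f : K →+ L := ((nsmulAddMonoidHom (α := G) p).comp K.subtype).codRestrict L (by
      rintro ⟨k, hk⟩
      change m • (p • k) = 0
      have : (p * m) • k = 0 := hk
      rw [← mul_nsmul]; exact this)
    haveI : Countable L := hm
    haveI : Countable f.ker := by
      have hc : (f.ker : Set K).Countable := by
        refine ((h p hp).preimage (f := (Subtype.val : K → G)) Subtype.val_injective).mono ?_
        intro k hk
        have hk' : f k = 0 := hk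
        have hk2 : p • (k : G) = 0 := congrArg Subtype.val hk'
        exact hk2
      exact hc
    exact (bohr_countable_of_ker f : Countable K)

/-- An uncountable abelian group contains an uncountable direct sum of copies of a
nontrivial group. -/
theorem bohr_exists_sum {G : Type*} [AddCommGroup G] (hG : ¬ Countable G) :
    ∃ (n : ℕ) (ι : Set G) (f : (ι →₀ ZMod n) →+ G), (1 : ZMod n) ≠ 0 ∧ Function.Injective f ∧
      ¬ Countable ι := by
  obtain ⟨s, hs, hmax⟩ := exists_maximal_linearIndepOn ℤ (id : G → G)
  by_cases hsc : Countable s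
  · by_cases hp : ∀ p : ℕ, p.Prime → {g : G | p • g = 0}.Countable
    · exfalso
      apply hG
      have ht := bohr_torsion_countable hp
      let S := Submodule.span ℤ s
      haveI : Countable S := by
        have : Countable (Set.range (Finsupp.linearCombination ℤ (Subtype.val : s → G))) :=
          (Set.countable_range _).to_subtype
        have h2 : ((LinearMap.range (Finsupp.linearCombination ℤ (Subtype.val : s → G)) :
          Submodule ℤ G) : Set G).Countable := by
          rw [LinearMap.coe_range]; exact Set.countable_range _
        rw [Finsupp.range_linearCombination, Subtype.range_coe] at h2
        exact h2
      have hex : ∀ g : G, ∃ n : ℕ, n ≠ 0 ∧ n • g ∈ S := by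
        intro g
        by_cases hg : g ∈ s
        · exact ⟨1, one_ne_zero, by simpa using Submodule.subset_span hg⟩
        · obtain ⟨a, ha, hag⟩ := hmax g hg
          refine ⟨a.natAbs, by simpa using ha, ?_⟩
          simp only [id, image_id'] at hag
          have hag' : a • g ∈ S := by simpa using hag
          rcases Int.natAbs_eq a with h | h
          · rw [h, natCast_zsmul] at hag'; exact hag'
          · rw [h, neg_smul, natCast_zsmul] at hag'; exact neg_mem_iff.1 hag'
      rw [← Set.countable_univ_iff]
      have : ∀ q : {n : ℕ // n ≠ 0}, {g : G | q.1 • g ∈ S}.Countable := by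
        rintro ⟨n, hn⟩
        let K : AddSubgroup G := S.toAddSubgroup.comap (nsmulAddMonoidHom (α := G) n)
        let f : K →+ S.toAddSubgroup :=
          ((nsmulAddMonoidHom (α := G) n).comp K.subtype).codRestrict S.toAddSubgroup
            (fun k => k.2)
        haveI : Countable S.toAddSubgroup := ‹Countable S›
        haveI : Countable f.ker := by
          have hc : (f.ker : Set K).Countable := by
            refine ((ht n hn).preimage (f := (Subtype.val : K → G)) Subtype.val_injective).mono ?_
            intro k hk
            have hk' : f k = 0 := hk
            have hk2 : n • (k : G) = 0 := congrArg Subtype.val hk'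
            exact hk2
          exact hc
        exact (bohr_countable_of_ker f : Countable K)
      refine (Set.countable_iUnion this).mono fun g _ => ?_
      obtain ⟨n, hn, hg⟩ := hex g
      exact mem_iUnion.2 ⟨⟨n, hn⟩, hg⟩
    · push Not at hp
      obtain ⟨p, hp, hunc⟩ := hp
      haveI : Fact p.Prime := ⟨hp⟩
      let K : AddSubgroup G := (nsmulAddMonoidHom (α := G) p).ker
      letI : Module (ZMod p) K := AddCommGroup.zmodModule (by
        rintro ⟨k, hk⟩
        exact Subtype.ext hk)
      let b := Module.Basis.ofVectorSpace (ZMod p) K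
      let e : (Module.Basis.ofVectorSpaceIndex (ZMod p) K) ≃
        (Subtype.val '' (Module.Basis.ofVectorSpaceIndex (ZMod p) K) : Set G) :=
        Equiv.Set.image _ _ Subtype.val_injective
      let b' := b.reindex e
      refine ⟨p, _, K.subtype.comp b'.repr.symm.toLinearMap.toAddMonoidHom, one_ne_zero, ?_, ?_⟩
      · exact Subtype.val_injective.comp b'.repr.symm.injective
      · intro hc
        apply hunc
        haveI : Countable K := b'.repr.injective.countable
        exact (inferInstance : Countable K)
  · exact ⟨0, s, (Finsupp.linearCombination ℤ (Subtype.val : s → G)).toAddMonoidHom,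
      (one_ne_zero : (1 : ℤ) ≠ 0), hs, hsc⟩

/-- A dense image in a compact group forces locally finite open families to be countable. -/
theorem bohr_locallyFinite_aux {K : Type*} [AddCommGroup K] [TopologicalSpace K]
    [IsTopologicalAddGroup K] [CompactSpace K] [T2Space K] {G β : Type*} [TopologicalSpace G]
    (j : G → K) (hj : IsInducing j) (hd : DenseRange j) (t : β → Set G) (hto : ∀ b, IsOpen (t b))
    (htn : ∀ b, (t b).Nonempty) (hlf : LocallyFinite t) : Countable β := by
  letI : MeasurableSpace K := borel K
  haveI : BorelSpace K := ⟨rfl⟩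
  let μ : Measure K := Measure.addHaarMeasure ⊤
  have hW : ∀ b, ∃ W : Set K, IsOpen W ∧ j ⁻¹' W = t b := fun b => hj.isOpen_iff.1 (hto b)
  choose W hWo hWt using hW
  have hN : ∀ g : G, ∃ N : Set K, IsOpen N ∧ j g ∈ N ∧ {b | (W b ∩ N).Nonempty}.Finite := by
    intro g
    obtain ⟨n, hn, hfin⟩ := hlf g
    obtain ⟨n', hn', hno, hgn⟩ := mem_nhds_iff.1 hn
    obtain ⟨N, hNo, rfl⟩ := hj.isOpen_iff.1 hno
    refine ⟨N, hNo, hgn, hfin.subset fun b hb => ?_⟩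
    obtain ⟨x, hx⟩ := hd.exists_mem_open ((hWo b).inter hNo) hb
    exact ⟨x, (hWt b) ▸ hx.1, hn' hx.2⟩
  choose N hNo hgN hNfin using hN
  let O : Set K := ⋃ g, N g
  have hOo : IsOpen O := isOpen_iUnion hNo
  have hcpt : ∀ C : Set K, IsCompact C → C ⊆ O → {b | (W b ∩ C).Nonempty}.Finite := by
    intro C hC hCO
    obtain ⟨F, hF⟩ := hC.elim_finite_subcover N hNo hCO
    refine (F.finite_toSet.biUnion fun g _ => hNfin g).subset ?_
    rintro b ⟨x, hxW, hxC⟩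
    obtain ⟨g, hg, hxg⟩ := mem_iUnion₂.1 (hF hxC)
    exact mem_iUnion₂.2 ⟨g, hg, x, hxW, hxg⟩
  have happ : ∀ n : ℕ, ∃ C : Set K, C ⊆ O ∧ IsCompact C ∧ μ (O \ C) < (n + 1 : ENNReal)⁻¹ := by
    intro n
    obtain ⟨C, hCO, hC, hlt⟩ := hOo.measurableSet.exists_isCompact_sdiff_lt (μ := μ)
      (measure_ne_top μ O) (ε := (n + 1 : ENNReal)⁻¹) (by simp)
    exact ⟨C, hCO, hC, hlt⟩
  choose C hCO hC hlt using happ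
  rw [← Set.countable_univ_iff]
  refine (Set.countable_iUnion fun n => (hcpt (C n) (hC n) (hCO n)).countable).mono fun b _ => ?_
  have hpos : 0 < μ (W b ∩ O) := by
    apply ((hWo b).inter hOo).measure_pos μ
    obtain ⟨x, hx⟩ := htn b
    rw [← hWt] at hx
    exact ⟨j x, hx, mem_iUnion.2 ⟨x, hgN x⟩⟩
  obtain ⟨n, hn⟩ := ENNReal.exists_inv_nat_lt hpos.ne'
  refine mem_iUnion.2 ⟨n, ?_⟩
  by_contra hemp
  have hsub : W b ∩ O ⊆ O \ C n := fun x hx => ⟨hx.2, fun hxC => hemp ⟨x, hx.1, hxC⟩⟩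
  have h1 := (measure_mono hsub).trans_lt (hlt n)
  have h2 : (n + 1 : ENNReal)⁻¹ ≤ (n : ENNReal)⁻¹ := ENNReal.inv_le_inv.2 (by simp)
  exact absurd (h1.trans_le h2) hn.not_gt

theorem bohr_locallyFinite {G : Type*} [AddCommGroup G] {β : Type*} (t : β → Set G)
    (hto : ∀ b, @IsOpen _ (bohrTopology G) (t b))
    (htn : ∀ b, (t b).Nonempty) (hlf : @LocallyFinite _ _ (bohrTopology G) t) : Countable β := by
  letI := bohrTopology G
  let P := (G →+ AddCircle (1 : ℝ)) → AddCircle (1 : ℝ)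
  let i : G →+ P := AddMonoidHom.mk' (fun g χ => χ g) (by
    intro a b; ext χ; exact map_add χ a b)
  have hi : IsInducing i := by
    constructor
    change bohrTopology G = _
    rw [bohrTopology, Pi.topologicalSpace, induced_iInf]
    simp_rw [induced_compose]
    rfl
  let K : AddSubgroup P := i.range.topologicalClosure
  haveI : CompactSpace K :=
    isCompact_iff_compactSpace.1 (i.range.isClosed_topologicalClosure.isCompact)
  have hmem : ∀ g, i g ∈ K := fun g => i.range.le_topologicalClosure ⟨g, rfl⟩
  let j : G → K := fun g => ⟨i g, hmem g⟩
  have hj : IsInducing j := by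
    apply IsInducing.of_comp (g := (Subtype.val : K → P))
    · exact hi.continuous.subtype_mk _
    · exact continuous_subtype_val
    · exact hi
  have hd : DenseRange j := by
    intro x
    rw [closure_subtype, ← Set.range_comp]
    have := x.2
    exact this
  exact bohr_locallyFinite_aux j hj hd t hto htn hlf

theorem bohr_paracompact_of_countable {X : Type*} [TopologicalSpace X] [RegularSpace X]
    [Countable X] : ParacompactSpace X := by
  refine ⟨fun α s hso hsc => ?_⟩
  obtain ⟨r, hr⟩ := exists_injective_nat X
  have h1 : ∀ x : X, ∃ a, x ∈ s a := fun x => mem_iUnion.1 (hsc ▸ mem_univ x)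
  choose a ha using h1
  have h2 : ∀ x : X, ∃ A : Set X, IsOpen A ∧ x ∈ A ∧ closure A ⊆ s (a x) := by
    intro x
    obtain ⟨C, hC, hCc, hCs⟩ := exists_mem_nhds_isClosed_subset ((hso (a x)).mem_nhds (ha x))
    obtain ⟨A, hAC, hA, hx⟩ := mem_nhds_iff.1 hC
    exact ⟨A, hA, hx, (closure_minimal hAC hCc).trans hCs⟩
  choose A hAo hxA hAs using h2
  have hfin : ∀ x : X, {y | r y < r x}.Finite := fun x =>
    (Set.finite_Iio (r x)).preimage hr.injOn
  have hfin' : ∀ x : X, {y | r y ≤ r x}.Finite := fun x =>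
    (Set.finite_Iic (r x)).preimage hr.injOn
  refine ⟨X, fun x => s (a x) \ ⋃ y ∈ {y | r y < r x}, closure (A y), ?_, ?_, ?_, ?_⟩
  · intro x
    exact (hso _).sdiff ((hfin x).isClosed_biUnion fun _ _ => isClosed_closure)
  · refine eq_univ_of_forall fun z => mem_iUnion.2 ?_
    obtain ⟨x, hx, hmin⟩ := WellFounded.has_min (measure r).wf {x | z ∈ s (a x)} ⟨z, ha z⟩
    refine ⟨x, hx, fun hz => ?_⟩
    obtain ⟨y, hy, hzy⟩ := mem_iUnion₂.1 hz
    exact hmin y (hAs y hzy) hy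
  · intro x
    refine ⟨A x, (hAo x).mem_nhds (hxA x), (hfin' x).subset ?_⟩
    rintro y ⟨z, ⟨_, hz⟩, hzA⟩
    by_contra hy
    have hxy : x ∈ {w | r w < r y} := by
      have h3 : ¬ r y ≤ r x := hy
      have h4 : r x < r y := lt_of_not_ge h3
      exact h4
    exact hz (mem_iUnion₂.2 ⟨x, hxy, subset_closure hzA⟩)
  · exact fun x => ⟨a x, sdiff_subset⟩

/-- For an abelian group `G`, the space `G^#` is paracompact iff `G` is countable. -/
theorem bohr_paracompact_iff_countable (G : Type*) [AddCommGroup G] :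
    letI := bohrTopology G
    ParacompactSpace G ↔ Countable G := by
  letI := bohrTopology G
  change ParacompactSpace G ↔ Countable G
  constructor
  · intro hP
    by_contra hG
    obtain ⟨n, ι, f, h1, hf, hι⟩ := bohr_exists_sum hG
    choose U hUo hxU hUfin using bohr_discrete (1 : ZMod n) h1 f hf
    obtain ⟨β, t, hto, htc, hlf, href⟩ := ParacompactSpace.locallyFinite_refinement G U hUo
      (eq_univ_of_forall fun x => mem_iUnion.2 ⟨x, hxU x⟩)
    have hc : Countable {b // (t b).Nonempty} :=
      bohr_locallyFinite (fun b : {b // (t b).Nonempty} => t b) (fun b => hto b) (fun b => b.2)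
        (hlf.comp_injective Subtype.val_injective)
    apply hι
    rw [← Set.countable_univ_iff]
    have hcb : ∀ b : {b // (t b).Nonempty}, {i | f (Finsupp.single i 1) ∈ t b}.Countable := by
      intro b
      obtain ⟨x, hx⟩ := href b
      exact ((hUfin x).subset fun i hi => hx hi).countable
    refine (Set.countable_iUnion hcb).mono fun i _ => ?_
    obtain ⟨b, hb⟩ := mem_iUnion.1 (htc ▸ mem_univ (f (Finsupp.single i 1)))
    exact mem_iUnion.2 ⟨⟨b, _, hb⟩, hb⟩
  · intro hc
    haveI : RegularSpace G := regularSpace_iInf fun χ => regularSpace_induced _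
    exact bohr_paracompact_of_countable
end

section
/- For every infinite abelian group G, the space G^# is not pseudocompact: there exists a continuous real-valued function on G^# that is unbounded. -/
open scoped Pointwise

/-- Every infinite abelian group maps onto a countable infinite group (up to taking ranges). -/
theorem exists_hom_countable (G : Type*) [AddCommGroup G] [Infinite G] :
    ∃ (D : Type) (_ : AddCommGroup D) (_ : Countable D) (φ : G →+ D), (Set.range φ).Infinite := by
  let f : ℕ ↪ G := Infinite.natEmbedding G
  let L : (ℕ →₀ ℤ) →ₗ[ℤ] G := Finsupp.linearCombination ℤ f
  let K : Submodule ℤ (ℕ →₀ ℤ) := LinearMap.ker L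
  let ι : (ℕ →₀ ℤ) →ₗ[ℤ] (ℕ →₀ ℚ) :=
    Finsupp.mapRange.linearMap (Int.castAddHom ℚ).toIntLinearMap
  have hι : Function.Injective ι :=
    Finsupp.mapRange_injective _ (by simp) Int.cast_injective
  let P : Submodule ℤ (ℕ →₀ ℚ) := K.map ι
  let D := (ℕ →₀ ℚ) ⧸ P
  have hcount : Countable D := (Submodule.Quotient.mk_surjective P).countable
  let div : DivisibleBy D ℤ := divisibleByOfSMulRightSurj D ℤ (by
    intro n hn x
    obtain ⟨y, rfl⟩ := Submodule.Quotient.mk_surjective P x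
    refine ⟨Submodule.Quotient.mk ((n : ℚ)⁻¹ • y), ?_⟩
    change n • Submodule.Quotient.mk ((n : ℚ)⁻¹ • y) = Submodule.Quotient.mk y
    rw [← Submodule.Quotient.mk_smul]
    congr 1
    ext i
    have : (n : ℚ) ≠ 0 := by exact_mod_cast hn
    simp
    field_simp)
  have hB : Module.Baer ℤ D := Module.Baer.of_divisible D
  let i : ((ℕ →₀ ℤ) ⧸ K) →ₗ[ℤ] G := K.liftQ L le_rfl
  have hi : Function.Injective i := by
    rw [← LinearMap.ker_eq_bot]
    exact Submodule.ker_liftQ_eq_bot _ _ _ le_rfl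
  let g : ((ℕ →₀ ℤ) ⧸ K) →ₗ[ℤ] D := K.mapQ P ι (Submodule.le_comap_map _ _)
  obtain ⟨h, hh⟩ := hB.extension_property i hi g
  refine ⟨D, inferInstance, hcount, h.toAddMonoidHom, ?_⟩
  have key : ∀ n, h (f n) = Submodule.Quotient.mk (ι (Finsupp.single n 1)) := by
    intro n
    have := LinearMap.congr_fun hh (Submodule.Quotient.mk (Finsupp.single n 1))
    have h1 : i (Submodule.Quotient.mk (Finsupp.single n 1)) = f n := by simp [i, L]
    rw [LinearMap.comp_apply, h1] at this
    exact this
  have hinj : Function.Injective (fun n => h (f n)) := by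
    intro n m hnm
    simp only [key] at hnm
    rw [Submodule.Quotient.eq, ← map_sub] at hnm
    obtain ⟨k, hk, hk'⟩ := hnm
    have := hι hk'
    subst this
    have h2 : L (Finsupp.single n 1 - Finsupp.single m 1) = 0 := hk
    simp only [L, map_sub, Finsupp.linearCombination_single, one_smul, sub_eq_zero] at h2
    exact f.injective h2
  exact (Set.infinite_range_of_injective hinj).mono (by rintro _ ⟨n, rfl⟩; exact ⟨f n, rfl⟩)

theorem exists_real_character (D : Type*) [AddCommGroup D] (d : D) (hd : d ≠ 0) :
    ∃ χ : D →+ AddCircle (1 : ℝ), χ d ≠ 0 := by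
  obtain ⟨c, hc⟩ := CharacterModule.exists_character_apply_ne_zero_of_ne_zero hd
  let j : AddCircle (1 : ℚ) →+ AddCircle (1 : ℝ) :=
    QuotientAddGroup.map (AddSubgroup.zmultiples (1 : ℚ)) (AddSubgroup.zmultiples (1 : ℝ))
      (Rat.castHom ℝ).toAddMonoidHom (by
        rintro _ ⟨n, rfl⟩
        exact ⟨n, by simp⟩)
  have hj : ∀ q, j q = 0 → q = 0 := by
    intro q hq
    obtain ⟨r, rfl⟩ := QuotientAddGroup.mk_surjective q
    have hq' : (((r : ℝ)) : AddCircle (1 : ℝ)) = 0 := hq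
    rw [AddCircle.coe_eq_zero_iff] at hq'
    obtain ⟨n, hn⟩ := hq'
    refine (AddCircle.coe_eq_zero_iff (1 : ℚ)).2 ⟨n, ?_⟩
    simp only [zsmul_eq_mul, mul_one] at hn ⊢
    exact_mod_cast hn
  exact ⟨j.comp c, fun h => hc (hj _ h)⟩

theorem not_isClosed_of_countable {X : Type*} [AddCommGroup X] [TopologicalSpace X]
    [IsTopologicalAddGroup X] [T2Space X] [CompactSpace X] (S : AddSubgroup X)
    [Countable S] [Infinite S] : ¬ IsClosed (S : Set X) := by
  intro hS
  have : CompactSpace S := isCompact_iff_compactSpace.1 hS.isCompact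
  obtain ⟨s, hs⟩ := nonempty_interior_of_iUnion_of_closed (X := S) (f := fun s : S => {s})
    (fun s => isClosed_singleton) (by ext; simp)
  have ho : IsOpen ({s} : Set S) := by
    have : interior ({s} : Set S) = {s} :=
      (Set.subset_singleton_iff_eq.1 interior_subset).resolve_left hs.ne_empty
    rw [← this]; exact isOpen_interior
  have h0 : IsOpen ({0} : Set S) := by
    have := ho.preimage (continuous_const_add s)
    convert this using 1
    ext x; simp
  have := discreteTopology_of_isOpen_singleton_zero h0
  have : Finite S := finite_of_compact_of_discrete
  exact not_finite S

/-- For every infinite abelian group `G`, the space `G^#` is not pseudocompact: there is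
an unbounded continuous real-valued function on `G^#`. -/
theorem bohr_not_pseudocompact (G : Type*) [AddCommGroup G] [Infinite G] :
    letI := bohrTopology G
    ∃ f : G → ℝ, Continuous f ∧ ∀ C : ℝ, ∃ x : G, C < |f x| := by
  letI := bohrTopology G
  have hχ : ∀ χ : G →+ AddCircle (1 : ℝ), Continuous χ := fun χ =>
    continuous_iInf_dom (i := χ) continuous_induced_dom
  obtain ⟨D, _, _, φ, hφ⟩ := exists_hom_countable G
  have hex : ∀ d : D, ∃ χ : D →+ AddCircle (1 : ℝ), d ≠ 0 → χ d ≠ 0 := by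
    intro d
    by_cases hd : d = 0
    · exact ⟨0, fun h => (h hd).elim⟩
    · obtain ⟨χ, h⟩ := exists_real_character D d hd
      exact ⟨χ, fun _ => h⟩
  choose χ hχ' using hex
  let E : D →+ (D → AddCircle (1 : ℝ)) := Pi.addMonoidHom χ
  have hE : Function.Injective E := by
    rw [injective_iff_map_eq_zero]
    intro d hd
    by_contra h
    exact hχ' d h (congrFun hd d)
  let Ψ : G →+ (D → AddCircle (1 : ℝ)) := E.comp φ
  have hΨ : Continuous Ψ := continuous_pi fun d => hχ ((χ d).comp φ)
  have hr : (Ψ.range : Set (D → AddCircle (1 : ℝ))) = E '' Set.range φ := by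
    rw [← Set.range_comp]; rfl
  have : Countable Ψ.range := by
    have : (Ψ.range : Set (D → AddCircle (1 : ℝ))).Countable := by
      rw [hr]; exact (Set.to_countable _).image _
    exact this.to_subtype
  have : Infinite Ψ.range := by
    have : (Ψ.range : Set (D → AddCircle (1 : ℝ))).Infinite := by
      rw [hr]; exact hφ.image hE.injOn
    exact this.to_subtype
  have : Fact ((0 : ℝ) < 1) := ⟨one_pos⟩
  have hnc := not_isClosed_of_countable Ψ.range
  obtain ⟨p, hp, hp'⟩ : ∃ p ∈ closure (Ψ.range : Set (D → AddCircle (1 : ℝ))), p ∉ Ψ.range := by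
    by_contra! h
    exact hnc (isClosed_of_closure_subset h)
  letI := TopologicalSpace.metrizableSpaceMetric (D → AddCircle (1 : ℝ))
  have hpos : ∀ x, 0 < dist (Ψ x) p := fun x => dist_pos.2 fun h => hp' ⟨x, h⟩
  refine ⟨fun x => (dist (Ψ x) p)⁻¹, ?_, ?_⟩
  · exact (hΨ.dist continuous_const).inv₀ fun x => (hpos x).ne'
  · intro C
    obtain ⟨_, ⟨x, rfl⟩, hx⟩ := Metric.mem_closure_iff.1 hp (|C| + 1)⁻¹ (by positivity)
    refine ⟨x, ?_⟩
    rw [abs_of_pos (inv_pos.2 (hpos x))]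
    rw [dist_comm] at hx
    have := (lt_inv_comm₀ (hpos x) (by positivity)).1 hx
    linarith [le_abs_self C]
end

section
/- For every abelian group G, every subset A of G^# contains a subset D with |D| = |A| such that D is relatively discrete and D is closed in G^#. -/
open scoped Pointwise

namespace BohrAux

/-- Extension of characters from a subgroup. -/
lemma exists_extend {G : Type*} [AddCommGroup G] (H : AddSubgroup G)
    (f : H →+ AddCircle (1 : ℝ)) : ∃ χ : G →+ AddCircle (1 : ℝ), ∀ h : H, χ h = f h := by
  obtain ⟨χ, hχ⟩ := (Module.Baer.of_divisible (AddCircle (1 : ℝ))).extension_property_addMonoidHom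
    H.subtype H.subtype_injective f
  exact ⟨χ, fun h => DFunLike.congr_fun hχ h⟩

/-- The inclusion of `ℚ/ℤ` into `ℝ/ℤ`. -/
noncomputable def ratToReal : AddCircle (1 : ℚ) →+ AddCircle (1 : ℝ) :=
  QuotientAddGroup.map _ _ (Rat.castHom ℝ).toAddMonoidHom (by
    intro x hx
    obtain ⟨n, rfl⟩ := AddSubgroup.mem_zmultiples_iff.1 hx
    refine AddSubgroup.mem_zmultiples_iff.2 ⟨n, ?_⟩
    simp)

lemma ratToReal_ne {q : AddCircle (1 : ℚ)} (hq : q ≠ 0) : ratToReal q ≠ 0 := by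
  induction q using QuotientAddGroup.induction_on with
  | H z =>
    intro h
    apply hq
    have h' : ((z : ℝ) : AddCircle (1 : ℝ)) = 0 := h
    rw [AddCircle.coe_eq_zero_iff] at h'
    obtain ⟨n, hn⟩ := h'
    refine (AddCircle.coe_eq_zero_iff _).2 ⟨n, ?_⟩
    have : ((n : ℚ) : ℝ) = z := by simpa using hn
    simpa using Rat.cast_injective this

lemma exists_char_ne {G : Type*} [AddCommGroup G] {a : G} (ha : a ≠ 0) :
    ∃ χ : G →+ AddCircle (1 : ℝ), χ a ≠ 0 := by
  obtain ⟨c, hc⟩ := CharacterModule.exists_character_apply_ne_zero_of_ne_zero ha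
  exact ⟨ratToReal.comp c, ratToReal_ne hc⟩

lemma exists_char_ne_sub {G : Type*} [AddCommGroup G] (H : AddSubgroup G) {a : G} (ha : a ∉ H) :
    ∃ χ : G →+ AddCircle (1 : ℝ), (∀ h ∈ H, χ h = 0) ∧ χ a ≠ 0 := by
  have : (QuotientAddGroup.mk a : G ⧸ H) ≠ 0 := by
    rwa [Ne, QuotientAddGroup.eq_zero_iff]
  obtain ⟨c, hc⟩ := exists_char_ne this
  refine ⟨c.comp (QuotientAddGroup.mk' H), fun h hh => ?_, hc⟩
  have : (QuotientAddGroup.mk h : G ⧸ H) = 0 := (QuotientAddGroup.eq_zero_iff h).2 hh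
  simp [this]

lemma norm_two_nsmul {u : AddCircle (1 : ℝ)} (hu : ‖u‖ < 1 / 4) : ‖(2 : ℕ) • u‖ = 2 * ‖u‖ := by
  induction u using QuotientAddGroup.induction_on with
  | H z =>
    change ‖((z : ℝ) : AddCircle (1 : ℝ))‖ < _ at hu
    change ‖(2 : ℕ) • ((z : ℝ) : AddCircle (1 : ℝ))‖ = 2 * ‖((z : ℝ) : AddCircle (1 : ℝ))‖
    have e1 : ((z : ℝ) : AddCircle (1 : ℝ)) = ((z - round z : ℝ) : AddCircle (1 : ℝ)) := by
      rw [eq_comm, ← sub_eq_zero, ← AddCircle.coe_sub, AddCircle.coe_eq_zero_iff]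
      exact ⟨-round z, by simp⟩
    have e2 := UnitAddCircle.norm_eq (x := z)
    change ‖((z : ℝ) : AddCircle (1 : ℝ))‖ = _ at e2
    rw [e2] at hu ⊢
    rw [e1, ← AddCircle.coe_nsmul, (AddCircle.norm_coe_eq_abs_iff (p := (1 : ℝ)) one_ne_zero).2]
    · simp [abs_mul]
    · simp only [nsmul_eq_mul, abs_mul, Nat.cast_ofNat, Nat.abs_ofNat, abs_one]
      linarith

lemma exists_nsmul_norm {v : AddCircle (1 : ℝ)} (hv : v ≠ 0) : ∃ k : ℕ, 1 / 4 ≤ ‖k • v‖ := by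
  by_contra! h
  have key : ∀ n : ℕ, ‖(2 ^ n) • v‖ = 2 ^ n * ‖v‖ := by
    intro n
    induction n with
    | zero => simp
    | succ n ih => rw [pow_succ', mul_smul, norm_two_nsmul (h _), ih]; ring
  have hpos : 0 < ‖v‖ := norm_pos_iff.2 hv
  obtain ⟨n, hn⟩ := pow_unbounded_of_one_lt (1 / ‖v‖) (one_lt_two : (1 : ℝ) < 2)
  have h1 := h (2 ^ n)
  rw [key] at h1
  rw [div_lt_iff₀ hpos] at hn
  linarith

lemma exists_shift {G : Type*} [AddCommGroup G] (H : AddSubgroup G) {a : G} (ha : a ∉ H)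
    (t : AddCircle (1 : ℝ)) :
    ∃ χ : G →+ AddCircle (1 : ℝ), (∀ h ∈ H, χ h = 0) ∧ 1 / 8 ≤ ‖t + χ a‖ := by
  by_cases ht : 1 / 8 ≤ ‖t‖
  · exact ⟨0, by simp, by simpa using ht⟩
  · obtain ⟨χ, h0, h1⟩ := exists_char_ne_sub H ha
    obtain ⟨k, hk⟩ := exists_nsmul_norm h1
    refine ⟨k • χ, fun h hh => by simp [h0 h hh], ?_⟩
    have := norm_sub_le (t + k • χ a) t
    rw [add_sub_cancel_left] at this
    simp only [AddMonoidHom.nsmul_apply]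
    push Not at ht
    linarith

/-- Finite version of the key construction. -/
lemma exists_char_finset {G : Type*} [AddCommGroup G] [LinearOrder G] (x : G) (F : Finset G)
    (hF : ∀ d ∈ F, d ∉ AddSubgroup.closure (insert x {b | b ∈ F ∧ b < d})) :
    ∃ χ : G →+ AddCircle (1 : ℝ), ∀ d ∈ F, 1 / 8 ≤ ‖χ d - χ x‖ := by
  induction F using Finset.induction_on_max with
  | empty => exact ⟨0, by simp⟩
  | insert a s hs ih =>
    obtain ⟨χ, hχ⟩ := ih (fun d hd hc => hF d (Finset.mem_insert_of_mem hd)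
      (AddSubgroup.closure_mono (Set.insert_subset_insert
        (show {b | b ∈ s ∧ b < d} ⊆ {b | b ∈ insert a s ∧ b < d} from
          fun b hb => ⟨Finset.mem_insert_of_mem hb.1, hb.2⟩)) hc))
    obtain ⟨ψ, h0, h1⟩ := exists_shift _ (hF a (Finset.mem_insert_self _ _)) (χ a - χ x)
    have hx : ψ x = 0 := h0 x (AddSubgroup.subset_closure (Set.mem_insert _ _))
    refine ⟨χ + ψ, fun d hd => ?_⟩
    rcases Finset.mem_insert.1 hd with rfl | hd'
    · simp only [AddMonoidHom.add_apply, hx]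
      convert h1 using 2
      abel
    · have : ψ d = 0 := h0 d (AddSubgroup.subset_closure
        (Set.mem_insert_of_mem _ ⟨hd, hs d hd'⟩))
      simpa [hx, this] using hχ d hd'

/-- The key construction, by compactness. -/
lemma exists_char_set {G : Type*} [AddCommGroup G] [LinearOrder G] (x : G) (D : Set G)
    (hD : ∀ d ∈ D, d ∉ AddSubgroup.closure (insert x {b | b ∈ D ∧ b < d})) :
    ∃ χ : G →+ AddCircle (1 : ℝ), ∀ d ∈ D, 1 / 8 ≤ ‖χ d - χ x‖ := by
  classical
  have : Fact ((0 : ℝ) < 1) := ⟨one_pos⟩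
  let K : Set (G → AddCircle (1 : ℝ)) := {f | ∀ a b, f (a + b) = f a + f b}
  have hK : IsClosed K := by
    simp only [K, Set.ofPred_forall]
    exact isClosed_iInter fun a => isClosed_iInter fun b =>
      isClosed_eq (by fun_prop) (by fun_prop)
  let C : D → Set (G → AddCircle (1 : ℝ)) := fun d => {f | 1 / 8 ≤ ‖f d - f x‖}
  have hC : ∀ d, IsClosed (C d) := fun d =>
    isClosed_le continuous_const (by fun_prop)
  have := hK.isCompact.inter_iInter_nonempty C hC (by
    intro u
    obtain ⟨χ, hχ⟩ := exists_char_finset x (u.image Subtype.val) (by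
      intro d hd hc
      obtain ⟨d', -, rfl⟩ := Finset.mem_image.1 hd
      refine hD d' d'.2 (AddSubgroup.closure_mono (Set.insert_subset_insert ?_) hc)
      rintro b ⟨hb, hlt⟩
      obtain ⟨b', -, rfl⟩ := Finset.mem_image.1 hb
      exact ⟨b'.2, hlt⟩)
    refine ⟨χ, fun a b => map_add χ a b, ?_⟩
    simp only [Set.mem_iInter]
    exact fun d hd => hχ d (Finset.mem_image_of_mem _ hd))
  obtain ⟨f, hfK, hf⟩ := this
  refine ⟨AddMonoidHom.mk' f hfK, fun d hd => ?_⟩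
  exact Set.mem_iInter.1 hf ⟨d, hd⟩

/-- Noetherianity: only finitely many exceptional elements. -/
lemma finite_bad {G : Type*} [AddCommGroup G] [LinearOrder G] [WellFoundedLT G] (x : G) (D : Set G)
    (hD : ∀ d ∈ D, d ∉ AddSubgroup.closure {b | b ∈ D ∧ b < d}) :
    {d | d ∈ D ∧ d ∈ AddSubgroup.closure (insert x {b | b ∈ D ∧ b < d})}.Finite := by
  by_contra hinf
  have : Infinite {d | d ∈ D ∧ d ∈ AddSubgroup.closure (insert x {b | b ∈ D ∧ b < d})} :=
    Set.infinite_coe_iff.2 hinf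
  let e := Infinite.natEmbedding {d | d ∈ D ∧ d ∈ AddSubgroup.closure (insert x {b | b ∈ D ∧ b < d})}
  obtain ⟨g, hg⟩ := exists_increasing_or_nonincreasing_subseq (· < ·) (fun n => (e n).1)
  rcases hg with hg | hg
  · let N : G → Submodule ℤ ℤ := fun d => AddSubgroup.toIntSubmodule
      ((AddSubgroup.closure {b | b ∈ D ∧ b < d}).comap (zmultiplesHom G x))
    have hN : StrictMono (fun n => N (e (g n)).1) := by
      refine strictMono_nat_of_lt_succ fun n => ?_
      have hlt : (e (g n)).1 < (e (g (n + 1))).1 := hg n (n + 1) n.lt_succ_self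
      have hmem := (e (g n)).2
      set d : G := (e (g n)).1
      set d' : G := (e (g (n + 1))).1
      have hmono : AddSubgroup.closure {b | b ∈ D ∧ b < d} ≤
          AddSubgroup.closure {b | b ∈ D ∧ b < d'} :=
        AddSubgroup.closure_mono fun b hb => ⟨hb.1, hb.2.trans hlt⟩
      obtain ⟨hdD, hdc⟩ := hmem
      rw [Set.insert_eq, AddSubgroup.closure_union, AddSubgroup.mem_sup] at hdc
      obtain ⟨y, hy, z, hz, hyz⟩ := hdc
      obtain ⟨k, rfl⟩ := AddSubgroup.mem_closure_singleton.1 hy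
      refine lt_of_le_of_ne (fun k hk => hmono hk) fun heq => ?_
      have hk' : k ∈ N d' := by
        change k • x ∈ AddSubgroup.closure {b | b ∈ D ∧ b < d'}
        rw [← eq_sub_iff_add_eq] at hyz
        rw [hyz]
        exact sub_mem (AddSubgroup.subset_closure ⟨hdD, hlt⟩) (hmono hz)
      have hk : k • x ∈ AddSubgroup.closure {b | b ∈ D ∧ b < d} := by
        have : k ∈ N d := by
          have heq' : N d = N d' := heq
          rw [heq']; exact hk'
        exact this
      have hfin := add_mem hk hz
      rw [hyz] at hfin
      exact hD d hdD hfin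
    exact not_strictMono_of_wellFoundedGT _ hN
  · have hanti : StrictAnti (fun n => (e (g n)).1) := by
      intro m n hmn
      refine lt_of_le_of_ne (not_lt.1 (hg m n hmn)) fun h => ?_
      exact hmn.ne' (g.injective (e.injective (Subtype.ext h)))
    exact not_strictAnti_of_wellFoundedLT _ hanti

/-- Local finiteness of `D` witnessed by single characters. -/
def Good {G : Type*} [AddCommGroup G] (D : Set G) : Prop :=
  ∀ x : G, ∃ χ : G →+ AddCircle (1 : ℝ), ∃ ε : ℝ, 0 < ε ∧ {d | d ∈ D ∧ ‖χ d - χ x‖ < ε}.Finite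

lemma Good.discrete_closed {G : Type*} [AddCommGroup G] {D : Set G} (h : Good D) :
    letI := bohrTopology G
    DiscreteTopology D ∧ IsClosed D := by
  letI := bohrTopology G
  have hcont : ∀ χ : G →+ AddCircle (1 : ℝ), Continuous χ := fun χ =>
    continuous_iInf_dom (i := χ) continuous_induced_dom
  have hT1 : T1Space G := by
    rw [t1Space_iff_exists_open]
    intro x y hxy
    obtain ⟨χ, hχ⟩ := exists_char_ne (sub_ne_zero.2 hxy)
    refine ⟨χ ⁻¹' {χ y}ᶜ, isOpen_compl_singleton.preimage (hcont χ), ?_, by simp⟩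
    simpa [sub_eq_zero] using hχ
  suffices H : IsClosed D ∧ IsDiscrete D from ⟨isDiscrete_iff_discreteTopology.1 H.2, H.1⟩
  rw [isClosed_and_discrete_iff]
  intro x
  rw [Filter.disjoint_principal_right]
  obtain ⟨χ, ε, hε, hfin⟩ := h x
  have hU : {y | ‖χ y - χ x‖ < ε} ∈ nhds x := by
    refine IsOpen.mem_nhds (isOpen_lt ((hcont χ).sub continuous_const).norm continuous_const) ?_
    simpa using hε
  have hF : ({d | d ∈ D ∧ ‖χ d - χ x‖ < ε} \ {x})ᶜ ∈ nhds x :=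
    (hfin.subset Set.sdiff_subset).isClosed.isOpen_compl.mem_nhds (by simp)
  filter_upwards [mem_nhdsWithin_of_mem_nhds hU, mem_nhdsWithin_of_mem_nhds hF,
    self_mem_nhdsWithin] with y h1 h2 h3 h4
  exact h2 ⟨⟨h4, h1⟩, h3⟩

lemma exists_good_of_big {G : Type*} [AddCommGroup G] (A : Set G)
    (h : ∀ S ⊆ A, A ⊆ AddSubgroup.closure S → Cardinal.mk S = Cardinal.mk A) :
    ∃ D ⊆ A, Cardinal.mk D = Cardinal.mk A ∧ Good D := by
  obtain ⟨_, _⟩ := exists_wellFoundedLT G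
  let D : Set G := {a | a ∈ A ∧ a ∉ AddSubgroup.closure {b | b ∈ A ∧ b < a}}
  have hDA : D ⊆ A := fun a ha => ha.1
  have hcl : ∀ a : G, a ∈ A → a ∈ AddSubgroup.closure D := by
    intro a
    induction a using WellFoundedLT.induction with
    | ind a ih =>
      intro ha
      by_cases haD : a ∈ D
      · exact AddSubgroup.subset_closure haD
      · have : a ∈ AddSubgroup.closure {b | b ∈ A ∧ b < a} := by
          by_contra hc
          exact haD ⟨ha, hc⟩
        exact (AddSubgroup.closure_le _).2 (fun b hb => ih b hb.2 hb.1) this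
  have hD : ∀ d ∈ D, d ∉ AddSubgroup.closure {b | b ∈ D ∧ b < d} := fun d hd hc =>
    hd.2 (AddSubgroup.closure_mono
      (show {b | b ∈ D ∧ b < d} ⊆ {b | b ∈ A ∧ b < d} from fun b hb => ⟨hDA hb.1, hb.2⟩) hc)
  refine ⟨D, hDA, h D hDA hcl, fun x => ?_⟩
  have hfin := finite_bad x D hD
  set bad := {d | d ∈ D ∧ d ∈ AddSubgroup.closure (insert x {b | b ∈ D ∧ b < d})} with hbad
  obtain ⟨χ, hχ⟩ := exists_char_set x (D \ bad) (by
    intro d hd hc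
    exact hd.2 ⟨hd.1, AddSubgroup.closure_mono
      (Set.insert_subset_insert (show {b | b ∈ D \ bad ∧ b < d} ⊆ {b | b ∈ D ∧ b < d} from
        fun b hb => ⟨hb.1.1, hb.2⟩)) hc⟩)
  refine ⟨χ, 1 / 8, by norm_num, hfin.subset fun d hd => ?_⟩
  by_contra hc
  exact absurd hd.2 (not_lt.2 (hχ d ⟨hd.1, hc⟩))

lemma mk_le_of_subset_closure {G : Type*} [AddCommGroup G] {A S : Set G}
    (h : A ⊆ AddSubgroup.closure S) : Cardinal.mk A ≤ Cardinal.mk (S →₀ ℤ) := by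
  have h1 : A ⊆ Set.range (Finsupp.linearCombination ℤ (Subtype.val : S → G)) := by
    intro a ha
    have h2 := h ha
    have h3 : a ∈ Submodule.span ℤ S := by
      rw [← Submodule.span_int_eq_addSubgroupClosure] at h2
      exact h2
    rw [Finsupp.mem_span_iff_linearCombination] at h3
    exact h3
  exact (Cardinal.mk_le_mk_of_subset h1).trans Cardinal.mk_range_le

lemma exists_theta (c : ℕ → ℝ) (hpos : ∀ n, 0 < c n) (hc : ∀ n, 4 * c n ≤ c (n + 1)) :
    ∃ θ : ℝ, ∀ n, 1 / 4 ≤ ‖((c n * θ : ℝ) : AddCircle (1 : ℝ))‖ := by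
  obtain ⟨m, hm⟩ : ∃ m : ℕ → ℤ, ∀ n : ℕ, m (n + 1) = ⌈c (n + 1) * (((m n : ℝ) + 1 / 4) / c n)⌉ :=
    ⟨fun n => Nat.rec (motive := fun _ => ℤ) 0
      (fun k (z : ℤ) => ⌈c (k + 1) * (((z : ℝ) + 1 / 4) / c k)⌉) n, fun n => rfl⟩
  let l : ℕ → ℝ := fun n => (m n + 1 / 4) / c n
  let r : ℕ → ℝ := fun n => (m n + 3 / 4) / c n
  have hlr : ∀ n, l n ≤ r n := fun n => by
    have := hpos n
    simp only [l, r]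
    gcongr
    norm_num
  have hanti : Antitone fun n => Set.Icc (l n) (r n) := by
    refine antitone_nat_of_succ_le fun n => ?_
    have h0 := hpos n
    have h1 := hpos (n + 1)
    apply Set.Icc_subset_Icc
    · have := Int.le_ceil (c (n + 1) * ((m n + 1 / 4) / c n))
      rw [← hm] at this
      simp only [l]
      rw [le_div_iff₀ h1]
      linarith
    · have h2 := Int.ceil_lt_add_one (c (n + 1) * ((m n + 1 / 4) / c n))
      rw [← hm] at h2
      simp only [r]
      rw [div_le_iff₀ h1]
      have e : (m n + 3 / 4) / c n * c (n + 1) =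
          c (n + 1) * ((m n + 1 / 4) / c n) + c (n + 1) / (2 * c n) := by
        field_simp
        ring
      have h3 : 2 ≤ c (n + 1) / (2 * c n) := by
        rw [le_div_iff₀ (by positivity)]
        linarith [hc n]
      linarith
  have hmem := ciSup_mem_iInter_Icc_of_antitone_Icc hanti hlr
  refine ⟨⨆ n, l n, fun n => ?_⟩
  have hn := Set.mem_iInter.1 hmem n
  obtain ⟨h1, h2⟩ := hn
  simp only [l, r] at h1 h2
  rw [div_le_iff₀ (hpos n)] at h1
  rw [le_div_iff₀ (hpos n)] at h2
  set t := c n * (⨆ n, l n) with ht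
  have h1' : m n + 1 / 4 ≤ t := by rw [ht, mul_comm]; exact h1
  have h2' : t ≤ m n + 3 / 4 := by rw [ht, mul_comm]; exact h2
  have e2 := UnitAddCircle.norm_eq (x := t)
  change ‖((t : ℝ) : AddCircle (1 : ℝ))‖ = _ at e2
  rw [e2]
  rcases le_or_gt (round t) (m n) with hr | hr
  · have : (round t : ℝ) ≤ m n := by exact_mod_cast hr
    exact le_trans (by linarith) (le_abs_self _)
  · have : (m n : ℝ) + 1 ≤ round t := by exact_mod_cast hr
    exact le_trans (by linarith) (neg_le_abs _)

lemma exists_infinite_image {H : Type*} [AddCommGroup H] [AddGroup.FG H] {B : Set H}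
    (hB : B.Infinite) : ∃ f : H →+ ℤ, (f '' B).Infinite := by
  by_contra! hfin
  obtain ⟨n, ι, _, p, hp, e, ⟨φ⟩⟩ := AddCommGroup.equiv_free_prod_directSum_zmod H
  classical
  have : ∀ i, NeZero (p i ^ e i) := fun i => ⟨pow_ne_zero _ (hp i).ne_zero⟩
  have : Finite (DirectSum ι fun i => ZMod (p i ^ e i)) :=
    Finite.of_equiv _ (DirectSum.addEquivProd fun i => ZMod (p i ^ e i)).symm.toEquiv
  let f : Fin n → H →+ ℤ := fun i =>
    (Finsupp.applyAddHom i).comp ((AddMonoidHom.fst _ _).comp φ.toAddMonoidHom)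
  let g : H → (Fin n → ℤ) × (DirectSum ι fun i => ZMod (p i ^ e i)) :=
    fun h => (fun i => f i h, (φ h).2)
  have hg : Function.Injective g := by
    intro a b hab
    apply φ.injective
    refine Prod.ext (Finsupp.ext fun i => ?_) ?_
    · exact congrFun (congrArg Prod.fst hab) i
    · have := congrArg Prod.snd hab
      exact this
  have hsub : g '' B ⊆ (Set.univ.pi fun i => f i '' B) ×ˢ Set.univ := by
    rintro _ ⟨b, hb, rfl⟩
    exact ⟨fun i _ => ⟨b, hb, rfl⟩, trivial⟩
  have hf : ((Set.univ.pi fun i => f i '' B) ×ˢ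
      (Set.univ : Set (DirectSum ι fun i => ZMod (p i ^ e i)))).Finite :=
    (Set.Finite.pi' fun i => by simpa using hfin (f i)).subset
      (show (Set.univ.pi fun i => f i '' B) ⊆ {x | ∀ i, x i ∈ f i '' B} from
        fun x hx i => hx i trivial) |>.prod Set.finite_univ
  exact hB ((hf.subset hsub).of_finite_image hg.injOn)

lemma exists_good_of_fg {G : Type*} [AddCommGroup G] (A S : Set G) (hA : A.Infinite)
    (hS : S.Finite) (h : A ⊆ AddSubgroup.closure S) :
    ∃ D ⊆ A, Cardinal.mk D = Cardinal.mk A ∧ Good D := by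
  have : Finite S := hS
  set H := AddSubgroup.closure S with hH
  have : AddGroup.FG H := AddGroup.closure_finite_fg S
  let B : Set H := Subtype.val ⁻¹' A
  have hB : B.Infinite := by
    intro hfin
    apply hA
    refine (hfin.image Subtype.val).subset fun x hx => ?_
    exact ⟨⟨x, h hx⟩, hx, rfl⟩
  obtain ⟨f, hf⟩ := exists_infinite_image hB
  have hex : ∀ n : ℤ, ∃ b ∈ B, n ≤ |f b| := by
    intro n
    by_contra! hc
    apply hf
    refine (Set.finite_Icc (-n) n).subset ?_
    rintro _ ⟨b, hb, rfl⟩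
    exact abs_le.1 (hc b hb).le
  choose p hpB hp using hex
  let a : ℕ → H := fun n => Nat.rec (motive := fun _ => H) (p 0) (fun _ z => p (10 * (|f z| + 1))) n
  have haB : ∀ n, a n ∈ B := by
    intro n
    cases n with
    | zero => exact hpB _
    | succ n => exact hpB _
  have hstep : ∀ n, 10 * (|f (a n)| + 1) ≤ |f (a (n + 1))| := fun n => hp _
  have hge : ∀ n : ℕ, (n : ℤ) ≤ |f (a n)| := by
    intro n
    induction n with
    | zero => simp
    | succ n ih => have := hstep n; push_cast; linarith [abs_nonneg (f (a n))]
  have hmono : StrictMono fun n => |f (a n)| :=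
    strictMono_nat_of_lt_succ fun n => by
      have := hstep n
      linarith [abs_nonneg (f (a n))]
  have hinj : Function.Injective fun n => (a n).1 := by
    intro m n hmn
    have : a m = a n := Subtype.ext hmn
    exact hmono.injective (by simp [this])
  refine ⟨Set.range fun n => (a n).1, ?_, ?_, ?_⟩
  · rintro _ ⟨n, rfl⟩
    exact haB n
  · have : Infinite A := hA.to_subtype
    have h1 : Cardinal.mk A ≤ Cardinal.aleph0 :=
      (mk_le_of_subset_closure h).trans Cardinal.mk_le_aleph0
    have h2 : Cardinal.aleph0 ≤ Cardinal.mk A := Cardinal.aleph0_le_mk A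
    rw [le_antisymm h1 h2]
    have : Infinite (Set.range fun n => (a n).1) := (Set.infinite_range_of_injective hinj).to_subtype
    have : Countable (Set.range fun n => (a n).1) := (Set.countable_range _).to_subtype
    exact Cardinal.mk_eq_aleph0 _
  · intro x
    by_cases hx : x ∈ H
    · set y := f ⟨x, hx⟩ with hy
      let N : ℕ := y.natAbs + 1
      have hN : (N : ℤ) = |y| + 1 := by simp [N]
      have hbig : ∀ n, |y| + 1 ≤ |f (a (n + N))| := fun n => by
        have := hge (n + N)
        push_cast at this
        linarith [(Nat.cast_nonneg n : (0 : ℤ) ≤ n)]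
      obtain ⟨θ, hθ⟩ := exists_theta (fun n => ((|f (a (n + N)) - y| : ℤ) : ℝ))
        (fun n => by
          have h1 := hbig n
          have h2 := abs_sub_abs_le_abs_sub (f (a (n + N))) y
          have : 0 < |f (a (n + N)) - y| := by linarith
          exact_mod_cast this)
        (fun n => by
          have h1 := hbig n
          have h2 := abs_sub_abs_le_abs_sub (f (a (n + 1 + N))) y
          have h3 := abs_sub (f (a (n + N))) y
          have h4 := hstep (n + N)
          rw [show n + N + 1 = n + 1 + N by ring] at h4
          have : 4 * |f (a (n + N)) - y| ≤ |f (a (n + 1 + N)) - y| := by linarith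
          exact_mod_cast this)
      obtain ⟨χ, hχ⟩ := exists_extend H
        ((zmultiplesHom (AddCircle (1 : ℝ)) (θ : AddCircle (1 : ℝ))).comp f)
      refine ⟨χ, 1 / 4, by norm_num, ((Finset.range N).finite_toSet.image fun n => (a n).1).subset ?_⟩
      rintro _ ⟨⟨n, rfl⟩, hlt⟩
      refine ⟨n, ?_, rfl⟩
      by_contra hn
      simp only [Finset.coe_range, Set.mem_Iio, not_lt] at hn
      obtain ⟨k, rfl⟩ := Nat.exists_eq_add_of_le' hn
      have e1 := hχ (a (k + N))
      have e2 := hχ ⟨x, hx⟩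
      simp only at e2
      rw [e1, e2] at hlt
      refine absurd hlt (not_lt.2 ((hθ k).trans_eq ?_))
      simp only [AddMonoidHom.comp_apply, zmultiplesHom_apply, ← sub_smul, ← hy]
      rw [← zsmul_eq_mul, AddCircle.coe_zsmul]
      rcases abs_choice (f (a (k + N)) - y) with h | h
      · rw [h]
      · rw [h, neg_smul, norm_neg]
    · obtain ⟨χ, h0, h1⟩ := exists_char_ne_sub H hx
      refine ⟨χ, ‖χ x‖, norm_pos_iff.2 h1, ?_⟩
      convert Set.finite_empty
      rw [Set.eq_empty_iff_forall_notMem]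
      rintro _ ⟨⟨n, rfl⟩, hlt⟩
      simp only at hlt
      rw [h0 _ (a n).2, zero_sub, norm_neg] at hlt
      exact lt_irrefl _ hlt

end BohrAux

/-- Every subset `A` of `G^#` contains a relatively discrete subset `D` with
`|D| = |A|` which is closed in `G^#`. -/
theorem bohr_exists_discrete_closed_subset (G : Type*) [AddCommGroup G] (A : Set G) :
    letI := bohrTopology G
    ∃ D : Set G, D ⊆ A ∧ Cardinal.mk D = Cardinal.mk A ∧ DiscreteTopology D ∧ IsClosed D := by
  suffices H : ∃ D ⊆ A, Cardinal.mk D = Cardinal.mk A ∧ BohrAux.Good D by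
    obtain ⟨D, h1, h2, h3⟩ := H
    exact ⟨D, h1, h2, h3.discrete_closed⟩
  by_cases hA : A.Finite
  · exact ⟨A, subset_rfl, rfl, fun x => ⟨0, 1, one_pos, hA.subset fun d hd => hd.1⟩⟩
  by_cases h : ∃ S : Set G, S.Finite ∧ A ⊆ AddSubgroup.closure S
  · obtain ⟨S, hS, hAS⟩ := h
    exact BohrAux.exists_good_of_fg A S hA hS hAS
  · refine BohrAux.exists_good_of_big A fun S hSA hAS => ?_
    refine le_antisymm (Cardinal.mk_le_mk_of_subset hSA) ?_
    have hSinf : S.Infinite := fun hS => h ⟨S, hS, hAS⟩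
    have : Infinite S := hSinf.to_subtype
    refine (BohrAux.mk_le_of_subset_closure hAS).trans ?_
    rw [Cardinal.mk_finsupp_lift_of_infinite]
    simp
end

section
/- Every infinite abelian group G contains a subset A with |A| = |G| such that A is relatively discrete in G^# and 0 is the only limit point in G^# of the difference set A − A = {a − b : a, b ∈ A}. -/
open scoped Pointwise

section
open Filter Topology

lemma bohr_exists_char {G : Type*} [AddCommGroup G] {a : G} (ha : a ≠ 0) :
    ∃ χ : G →+ AddCircle (1 : ℝ), χ a ≠ 0 := by
  obtain ⟨c, hc⟩ := CharacterModule.exists_character_apply_ne_zero_of_ne_zero ha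
  let j : AddCircle (1 : ℚ) →+ AddCircle (1 : ℝ) :=
    QuotientAddGroup.map _ _ (Rat.castHom ℝ).toAddMonoidHom (by
      intro q hq
      obtain ⟨n, rfl⟩ := AddSubgroup.mem_zmultiples_iff.1 hq
      exact AddSubgroup.mem_zmultiples_iff.2 ⟨n, by simp⟩)
  refine ⟨j.comp (show G →+ AddCircle (1 : ℚ) from c), fun h => hc ?_⟩
  have h2 : j (c a) = 0 := h
  clear h
  revert h2
  generalize c a = z
  induction z using QuotientAddGroup.induction_on with
  | H q =>
    intro h2
    have h3 : ((q : ℝ) : AddCircle (1 : ℝ)) = 0 := h2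
    obtain ⟨n, hn⟩ := (AddCircle.coe_eq_zero_iff (1 : ℝ)).1 h3
    refine (AddCircle.coe_eq_zero_iff (1 : ℚ)).2 ⟨n, ?_⟩
    simp only [zsmul_eq_mul, mul_one] at hn ⊢
    exact_mod_cast hn

lemma bohr_norm_two {c : AddCircle (1 : ℝ)} (h : ‖c‖ < 1 / 4) : ‖c + c‖ = 2 * ‖c‖ := by
  induction c using QuotientAddGroup.induction_on with
  | H x =>
    have e : ∀ y : ℝ, ‖(y : AddCircle (1 : ℝ))‖ = |y - round y| := fun y => by
      simpa using AddCircle.norm_eq (p := (1:ℝ)) (x := y)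
    have h1 : ‖(x : AddCircle (1 : ℝ))‖ < 1 / 4 := h
    have e2 : ((x - round x : ℝ) : AddCircle (1:ℝ)) = (x : AddCircle (1:ℝ)) := by
      have : ((round x : ℝ) : AddCircle (1:ℝ)) = 0 :=
        (AddCircle.coe_eq_zero_iff (1 : ℝ)).2 ⟨round x, by simp⟩
      rw [AddCircle.coe_sub, this, sub_zero]
    change ‖(x : AddCircle (1 : ℝ)) + (x : AddCircle (1 : ℝ))‖ = 2 * ‖(x : AddCircle (1 : ℝ))‖
    rw [← e2] at h1 ⊢
    have hy' : |x - round x| < 1 / 4 := by rw [← e, ← e2]; exact h1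
    generalize x - round x = y at *
    have k : ∀ z : ℝ, |z| ≤ 1 / 2 → ‖(z : AddCircle (1:ℝ))‖ = |z| := fun z hz =>
      (AddCircle.norm_coe_eq_abs_iff 1 one_ne_zero).2 (by simpa using hz)
    rw [← AddCircle.coe_add, k y (by linarith), ← two_mul, k _ (by rw [abs_mul, abs_two]; linarith),
      abs_mul, abs_two]

lemma bohr_exists_big {c : AddCircle (1 : ℝ)} (hc : c ≠ 0) : ∃ k : ℕ, 1 / 4 ≤ ‖k • c‖ := by
  by_contra! H
  have h : ∀ n : ℕ, ‖(2 ^ n) • c‖ = 2 ^ n * ‖c‖ := by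
    intro n
    induction n with
    | zero => simp
    | succ n ih =>
      rw [pow_succ, mul_smul, two_smul, smul_add, bohr_norm_two (H _), ih]; ring
  have hpos : 0 < ‖c‖ := norm_pos_iff.2 hc
  obtain ⟨n, hn⟩ := pow_unbounded_of_one_lt (1 / ‖c‖) (one_lt_two (α := ℝ))
  have := H (2 ^ n)
  rw [h n] at this
  rw [div_lt_iff₀ hpos] at hn
  linarith

lemma bohr_exists_char_big {G : Type*} [AddCommGroup G] {a : G} (ha : a ≠ 0) :
    ∃ χ : G →+ AddCircle (1 : ℝ), 1 / 4 ≤ ‖χ a‖ := by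
  obtain ⟨χ, h⟩ := bohr_exists_char ha
  obtain ⟨k, hk⟩ := bohr_exists_big h
  exact ⟨k • χ, by simpa using hk⟩

lemma bohr_isTopologicalAddGroup (G : Type*) [AddCommGroup G] :
    @IsTopologicalAddGroup G (bohrTopology G) _ := by
  unfold bohrTopology
  exact topologicalAddGroup_iInf fun χ => topologicalAddGroup_induced χ

lemma bohr_tendsto {G : Type*} [AddCommGroup G] {ι : Type*} (f : ι → G) (l : Filter ι) (x : G) :
    Tendsto f l (@nhds G (bohrTopology G) x) ↔
      ∀ χ : G →+ AddCircle (1 : ℝ), Tendsto (fun i => χ (f i)) l (𝓝 (χ x)) := by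
  unfold bohrTopology
  simp only [nhds_iInf, tendsto_iInf, nhds_induced, tendsto_comap_iff]
  rfl

lemma bohr_criterion {G : Type*} [AddCommGroup G] (A : Set G) (hinf : A.Infinite)
    (h1 : ∀ x : G, x ≠ 0 → ∃ χ : G →+ AddCircle (1 : ℝ), χ x ≠ 0 ∧
      ∀ ε : ℝ, 0 < ε → {a ∈ A | ε ≤ ‖χ a‖}.Finite)
    (h2 : ∃ (ψ : G →+ AddCircle (1 : ℝ)) (δ : ℝ), 0 < δ ∧ ∀ a ∈ A, δ ≤ ‖ψ a‖) :
    letI := bohrTopology G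
    DiscreteTopology A ∧ ∀ x : G, AccPt x (Filter.principal (A - A)) ↔ x = 0 := by
  let _ := bohrTopology G
  have := bohr_isTopologicalAddGroup G
  have hχ : ∀ χ : G →+ AddCircle (1 : ℝ), Continuous χ := fun χ =>
    continuous_iff_continuousAt.2 fun x => (bohr_tendsto id (𝓝 x) x).1 tendsto_id χ
  have : T1Space G := by
    have : T0Space G := by
      constructor
      intro x y hxy
      by_contra hne
      obtain ⟨χ, hχ0⟩ := bohr_exists_char (sub_ne_zero.2 hne)
      refine hχ0 ?_
      rw [map_sub, sub_eq_zero]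
      exact (hxy.map (hχ χ)).eq
    infer_instance
  -- no accumulation points of `A`
  have hA : ∀ x : G, ∀ᶠ y in 𝓝 x, y ≠ x → y ∉ A := by
    intro x
    by_cases hx : x = 0
    · obtain ⟨ψ, δ, hδ, hψ⟩ := h2
      have : ∀ᶠ y in 𝓝 x, ‖ψ y‖ < δ := by
        refine ((hχ ψ).norm.tendsto x).eventually_lt_const ?_
        simpa [hx] using hδ
      filter_upwards [this] with y hy _ hyA
      exact absurd (hψ y hyA) (not_le.2 hy)
    · obtain ⟨χ, hne, hfin⟩ := h1 x hx
      have hp : 0 < ‖χ x‖ := norm_pos_iff.2 hne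
      have hf := hfin (‖χ x‖ / 2) (by positivity)
      have e1 : ∀ᶠ y in 𝓝 x, ‖χ x‖ / 2 < ‖χ y‖ :=
        ((hχ χ).norm.tendsto x).eventually_const_lt (by linarith)
      have e2 : ∀ᶠ y in 𝓝 x, ∀ a ∈ {a ∈ A | ‖χ x‖ / 2 ≤ ‖χ a‖}, y ≠ x → y ≠ a := by
        rw [Filter.eventually_all_finite hf]
        intro a _
        by_cases hxa : x = a
        · subst hxa; exact Eventually.of_forall fun y h => h
        · filter_upwards [isOpen_ne.mem_nhds hxa] with y hy _ using hy
      filter_upwards [e1, e2] with y h1 h2 hyx hyA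
      exact h2 y ⟨hyA, h1.le⟩ hyx rfl
  constructor
  · rw [discreteTopology_subtype_iff]
    intro x _
    have : ¬ AccPt x (𝓟 A) := by
      rw [accPt_iff_frequently, not_frequently]
      filter_upwards [hA x] with y hy h using hy h.1 h.2
    simpa [AccPt, neBot_iff] using this
  intro x
  constructor
  · intro hacc
    by_contra hx
    revert hacc
    rw [imp_false, accPt_iff_frequently, not_frequently]
    obtain ⟨χ, hne, hfin⟩ := h1 x hx
    have hp : 0 < ‖χ x‖ := norm_pos_iff.2 hne
    have hf := hfin (‖χ x‖ / 4) (by positivity)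
    have e1 : ∀ᶠ y in 𝓝 x, ‖χ x‖ / 2 < ‖χ y‖ :=
      ((hχ χ).norm.tendsto x).eventually_const_lt (by linarith)
    have e2 : ∀ᶠ y in 𝓝 x, ∀ f ∈ {a ∈ A | ‖χ x‖ / 4 ≤ ‖χ a‖}, y ≠ x → f - y ∉ A ∧ y + f ∉ A := by
      rw [Filter.eventually_all_finite hf]
      intro f _
      have t1 : Tendsto (fun y : G => f - y) (𝓝 x) (𝓝 (f - x)) :=
        (continuous_const.sub continuous_id).tendsto x
      have t2 : Tendsto (fun y : G => y + f) (𝓝 x) (𝓝 (x + f)) :=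
        (continuous_id.add continuous_const).tendsto x
      filter_upwards [t1.eventually (hA _), t2.eventually (hA _)] with y h1 h2 hyx
      exact ⟨h1 (by simpa using hyx), h2 (by simpa using hyx)⟩
    filter_upwards [e1, e2] with y h1 h2
    rintro ⟨hyx, a, ha, b, hb, rfl⟩
    by_cases ha' : ‖χ x‖ / 4 ≤ ‖χ a‖
    · exact (h2 a ⟨ha, ha'⟩ hyx).1 (by simpa using hb)
    by_cases hb' : ‖χ x‖ / 4 ≤ ‖χ b‖
    · exact (h2 b ⟨hb, hb'⟩ hyx).2 (by simpa using ha)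
    have := norm_sub_le (χ a) (χ b)
    simp only [map_sub] at h1
    linarith
  · rintro rfl
    rw [accPt_iff_frequently]
    intro hev
    have : (cofinite ⊓ 𝓟 A : Filter G).NeBot := hinf.cofinite_inf_principal_neBot
    let F : Ultrafilter G := Ultrafilter.of (cofinite ⊓ 𝓟 A)
    have hF : (F : Filter G) ≤ cofinite ⊓ 𝓟 A := Ultrafilter.of_le _
    have hFA : ∀ᶠ a in (F : Filter G), a ∈ A := (hF.trans inf_le_right) (mem_principal_self A)
    have hlim : Tendsto (fun p : G × G => p.1 - p.2) ((F : Filter G) ×ˢ (F : Filter G)) (𝓝 0) := by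
      rw [bohr_tendsto]
      intro χ
      have hl : Tendsto χ F (𝓝 (F.map χ).lim) := (F.map χ).le_nhds_lim
      have := (hl.comp tendsto_fst).sub (hl.comp (tendsto_snd (f := (F : Filter G))))
      simpa [Function.comp_def] using this
    have h3 := (hlim.eventually hev).curry
    obtain ⟨a, h4, haA⟩ := (h3.and hFA).exists
    have h5 : ∀ᶠ b in (F : Filter G), b ≠ a :=
      (hF.trans inf_le_left) (by simp)
    obtain ⟨b, ⟨hb, hbA⟩, hba⟩ := ((h4.and hFA).and h5).exists
    exact hb ⟨sub_ne_zero.2 hba.symm, a, haA, b, hbA, rfl⟩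

lemma bohr_no_conv {G : Type*} [AddCommGroup G] (c : ℕ → G) (hc : ∀ n, c n ≠ 0) :
    ∃ ψ : G →+ AddCircle (1 : ℝ), ¬ Tendsto (fun n => ψ (c n)) atTop (𝓝 0) := by
  by_contra! H
  let K : AddSubgroup (G → AddCircle (1 : ℝ)) :=
    { carrier := {f | ∀ a b, f (a + b) = f a + f b}
      add_mem' := by
        intro f g hf hg a b
        simp only [Pi.add_apply, hf a b, hg a b]; abel
      zero_mem' := by intro a b; simp
      neg_mem' := by
        intro f hf a b
        simp only [Pi.neg_apply, hf a b]; abel }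
  have hK : IsClosed (K : Set (G → AddCircle (1 : ℝ))) := by
    have : (K : Set (G → AddCircle (1 : ℝ))) = ⋂ a, ⋂ b, {f | f (a + b) = f a + f b} := by
      ext f; simp [K]
    rw [this]
    exact isClosed_iInter fun a => isClosed_iInter fun b =>
      isClosed_eq (by fun_prop) (by fun_prop)
  have : CompactSpace K := isCompact_iff_compactSpace.1 hK.isCompact
  letI : MeasurableSpace K := borel K
  have : BorelSpace K := ⟨rfl⟩
  let μ : MeasureTheory.Measure K := MeasureTheory.Measure.addHaar
  have : MeasureTheory.IsFiniteMeasure μ := inferInstance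
  let e : G → K → ℂ := fun a f => ((AddCircle.toCircle (f.1 a) : Circle) : ℂ)
  have hecont : ∀ a, Continuous (e a) := fun a =>
    continuous_subtype_val.comp (AddCircle.continuous_toCircle.comp
      ((continuous_apply a).comp continuous_subtype_val))
  have h0 : ∀ n, ∫ f, e (c n) f ∂μ = 0 := by
    intro n
    obtain ⟨χ, hχ⟩ := bohr_exists_char (hc n)
    let k : K := ⟨χ, fun a b => map_add χ a b⟩
    have h1 := MeasureTheory.integral_add_left_eq_self (μ := μ) (e (c n)) k
    have h2 : ∀ f : K, e (c n) (k + f) = e (c n) k * e (c n) f := by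
      intro f
      simp [e, AddCircle.toCircle_add]
    simp only [h2] at h1
    rw [MeasureTheory.integral_const_mul] at h1
    have h3 : e (c n) k ≠ 1 := by
      intro h
      have h4 : AddCircle.toCircle (χ (c n)) = 1 := Circle.ext (by simpa using h)
      apply hχ
      apply AddCircle.injective_toCircle one_ne_zero
      rw [h4, AddCircle.toCircle_zero]
    have h5 : (e (c n) k - 1) * ∫ f, e (c n) f ∂μ = 0 := by rw [sub_mul, h1]; ring
    exact (mul_eq_zero.1 h5).resolve_left (sub_ne_zero.2 h3)
  have hlim : Tendsto (fun n => ∫ f, e (c n) f ∂μ) atTop (𝓝 (∫ f : K, (1 : ℂ) ∂μ)) := by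
    refine MeasureTheory.tendsto_integral_of_dominated_convergence (fun _ => (1 : ℝ))
      (fun n => (hecont _).aestronglyMeasurable_of_compactSpace) (MeasureTheory.integrable_const _)
      (fun n => Eventually.of_forall fun f => by exact (Circle.norm_coe _).le) (Eventually.of_forall fun f => ?_)
    have h1 := H (AddMonoidHom.mk' f.1 f.2)
    have h2 : Continuous (fun z : AddCircle (1 : ℝ) => ((AddCircle.toCircle z : Circle) : ℂ)) :=
      continuous_subtype_val.comp AddCircle.continuous_toCircle
    have h3 := (h2.tendsto 0).comp h1
    simpa [AddCircle.toCircle_zero, Function.comp_def] using h3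
  simp only [h0] at hlim
  have h6 := tendsto_nhds_unique hlim tendsto_const_nhds
  have h7 : μ.real Set.univ = 0 := by simpa using h6
  rw [MeasureTheory.measureReal_eq_zero_iff] at h7
  exact (isOpen_univ.measure_pos μ Set.univ_nonempty).ne' h7

lemma bohr_countable {G : Type*} [AddCommGroup G] [Infinite G] [Countable G] :
    ∃ A : Set G, A.Infinite ∧
      (∀ x : G, x ≠ 0 → ∃ χ : G →+ AddCircle (1 : ℝ), χ x ≠ 0 ∧
        ∀ ε : ℝ, 0 < ε → {a ∈ A | ε ≤ ‖χ a‖}.Finite) ∧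
      ∃ (ψ : G →+ AddCircle (1 : ℝ)) (δ : ℝ), 0 < δ ∧ ∀ a ∈ A, δ ≤ ‖ψ a‖ := by
  have hch : ∀ x : G, ∃ χ : G →+ AddCircle (1 : ℝ), x ≠ 0 → χ x ≠ 0 := by
    intro x
    by_cases hx : x = 0
    · exact ⟨0, fun h => absurd hx h⟩
    · obtain ⟨χ, h⟩ := bohr_exists_char hx
      exact ⟨χ, fun _ => h⟩
  choose X hX using hch
  let s : ℕ → G := Infinite.natEmbedding G
  have hs : Function.Injective s := (Infinite.natEmbedding G).injective
  obtain ⟨p, φ, hφ, hlim⟩ := CompactSpace.tendsto_subseq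
    (fun (n : ℕ) (x : G) => X x (s n))
  let c : ℕ → G := fun n => s (φ (n + 1)) - s (φ n)
  have hc : ∀ n, c n ≠ 0 := fun n h => by
    have := hφ.injective (hs (sub_eq_zero.1 h))
    omega
  have hc0 : ∀ x, Tendsto (fun n => X x (c n)) atTop (𝓝 0) := by
    intro x
    have h1 := (tendsto_pi_nhds.1 hlim) x
    have h2 := ((tendsto_add_atTop_iff_nat 1).2 h1).sub h1
    simpa [c, Function.comp_def] using h2
  obtain ⟨ψ, hψ⟩ := bohr_no_conv c hc
  rw [Metric.tendsto_atTop] at hψ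
  push Not at hψ
  obtain ⟨δ, hδ, hψ⟩ := hψ
  simp only [dist_zero_right] at hψ
  have hfr : ∃ᶠ n in atTop, δ ≤ ‖ψ (c n)‖ := frequently_atTop.2 hψ
  have hfin : ∀ x : G, ∀ ε : ℝ, 0 < ε → {n | ε ≤ ‖X x (c n)‖}.Finite := by
    intro x ε hε
    have h1 := (hc0 x).norm
    rw [norm_zero] at h1
    have h2 := h1.eventually_lt_const hε
    rw [← Nat.cofinite_eq_atTop] at h2
    simpa [Filter.eventually_cofinite] using h2
  have hI : {n | δ ≤ ‖ψ (c n)‖}.Infinite := Nat.frequently_atTop_iff_infinite.1 hfr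
  refine ⟨c '' {n | δ ≤ ‖ψ (c n)‖}, ?_, ?_, ψ, δ, hδ, ?_⟩
  · intro hf
    refine hI ((Set.Finite.preimage' hf fun g hg => ?_).subset (Set.subset_preimage_image c _))
    obtain ⟨m, _, rfl⟩ := hg
    refine (hfin (c m) _ (norm_pos_iff.2 (hX (c m) (hc m)))).subset ?_
    intro n hn
    simp only [Set.mem_preimage, Set.mem_singleton_iff] at hn
    simp [hn]
  · intro x hx
    refine ⟨X x, hX x hx, fun ε hε => ((hfin x ε hε).image c).subset ?_⟩
    rintro _ ⟨⟨n, _, rfl⟩, h⟩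
    exact ⟨n, h, rfl⟩
  · rintro _ ⟨n, hn, rfl⟩
    exact hn

lemma bohr_extend_s10 {M N Q : Type*} [AddCommGroup M] [AddCommGroup N] [AddCommGroup Q]
    (hQ : Module.Baer ℤ Q) (f : M →ₗ[ℤ] N) (g : M →ₗ[ℤ] Q)
    (h : ∀ m, f m = 0 → g m = 0) : ∃ k : N →ₗ[ℤ] Q, ∀ m, k (f m) = g m := by
  obtain ⟨k, hk⟩ := hQ.extension_property ((LinearMap.ker f).liftQ f le_rfl)
    (LinearMap.ker_eq_bot.1 (Submodule.ker_liftQ_eq_bot _ _ _ le_rfl))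
    ((LinearMap.ker f).liftQ g (fun m hm => h m hm))
  refine ⟨k, fun m => ?_⟩
  have := congrArg (fun l => l (Submodule.Quotient.mk m)) hk
  exact this

/-- A countable divisible group containing all cyclic groups. -/
abbrev BohrE : Type := ℚ × AddCircle (1 : ℚ)

lemma bohrE_countable : Countable BohrE := by
  have : Countable (AddCircle (1 : ℚ)) := by
    unfold AddCircle
    exact Quotient.countable
  infer_instance

lemma bohrE_exists {G : Type*} [AddCommGroup G] (a : G) :
    ∃ e : BohrE, ∀ k : ℤ, k • a = 0 ↔ k • e = 0 := by
  have key : ∀ e : BohrE, addOrderOf e = addOrderOf a → ∀ k : ℤ, k • a = 0 ↔ k • e = 0 := by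
    intro e he k
    rw [← addOrderOf_dvd_iff_zsmul_eq_zero, ← addOrderOf_dvd_iff_zsmul_eq_zero, he]
  rcases Nat.eq_zero_or_pos (addOrderOf a) with h | h
  · refine ⟨(1, 0), key _ ?_⟩
    rw [h, addOrderOf_eq_zero_iff']
    intro n hn h0
    have := congrArg Prod.fst h0
    simp at this
    omega
  · refine ⟨(0, ((1 / (addOrderOf a : ℚ) : ℚ) : AddCircle (1 : ℚ))), key _ ?_⟩
    have : Fact ((0 : ℚ) < 1) := ⟨one_pos⟩
    have h1 := AddCircle.addOrderOf_period_div (p := (1 : ℚ)) h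
    rw [Prod.addOrderOf_mk, h1]
    simp

lemma bohrE_baer (S : Type*) : Module.Baer ℤ (S →₀ BohrE) := by
  classical
  let : DivisibleBy (S →₀ BohrE) ℤ := divisibleByOfSMulRightSurj _ _ (by
    intro n hn f
    refine ⟨f.mapRange (fun x => if x = 0 then 0 else DivisibleBy.div x n) (by simp), ?_⟩
    ext1 s
    simp only [Finsupp.smul_apply, Finsupp.mapRange_apply]
    split_ifs with h
    · simp [h]
    · exact DivisibleBy.div_cancel _ hn)
  exact Module.Baer.of_divisible _

/-- Independence of a set of elements of an abelian group. -/
def BohrIndep {G : Type*} [AddCommGroup G] (A : Set G) : Prop :=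
  (0 : G) ∉ A ∧ ∀ (s : Finset G) (n : G → ℤ), (s : Set G) ⊆ A → ∑ a ∈ s, n a • a = 0 →
    ∀ a ∈ s, n a • a = 0

lemma bohr_exists_maximal (G : Type*) [AddCommGroup G] :
    ∃ A : Set G, Maximal BohrIndep A := by
  obtain ⟨A, _, hA⟩ := zorn_subset_nonempty {A : Set G | BohrIndep A} (by
    intro c hc hchain hne
    refine ⟨⋃₀ c, ⟨?_, ?_⟩, fun s hs => Set.subset_sUnion_of_mem hs⟩
    · rintro ⟨A, hA, h0⟩
      exact (hc hA).1 h0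
    · intro s n hs
      obtain ⟨A, hA, hsA⟩ := hchain.directedOn.exists_mem_subset_of_finset_subset_biUnion hne
        (f := id) (s := s) (by simpa [Set.sUnion_eq_biUnion] using hs)
      exact (hc hA).2 s n hsA) ∅ (by
      refine ⟨by simp, ?_⟩
      intro s n hs _ a ha
      exact absurd (hs ha) (by simp))
  exact ⟨A, hA⟩

lemma bohr_maximal_meets {G : Type*} [AddCommGroup G] {A : Set G} (hA : Maximal BohrIndep A)
    (g : G) (hg : g ≠ 0) : ∃ k : ℤ, k • g ≠ 0 ∧ k • g ∈ Submodule.span ℤ A := by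
  classical
  by_contra! H
  have hins : BohrIndep (insert g A) := by
    refine ⟨?_, ?_⟩
    · rintro (h | h)
      · exact hg h.symm
      · exact hA.1.1 h
    · intro s n hs hsum
      have hsub : ((s.erase g : Finset G) : Set G) ⊆ A := by
        intro a ha
        rw [Finset.mem_coe, Finset.mem_erase] at ha
        exact (hs ha.2).resolve_left ha.1
      by_cases hgs : g ∈ s
      · rw [← Finset.add_sum_erase _ _ hgs] at hsum
        have hmem : ∑ a ∈ s.erase g, n a • a ∈ Submodule.span ℤ A :=
          Submodule.sum_mem _ fun a ha => Submodule.smul_mem _ _ (Submodule.subset_span (hsub ha))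
        have h0 : n g • g = 0 := by
          by_contra h
          refine H _ h ?_
          rw [eq_neg_of_add_eq_zero_left hsum]
          exact Submodule.neg_mem _ hmem
        rw [h0, zero_add] at hsum
        intro a ha
        by_cases hag : a = g
        · rw [hag]; exact h0
        · exact hA.1.2 _ n hsub hsum a (Finset.mem_erase.2 ⟨hag, ha⟩)
      · rw [Finset.erase_eq_of_notMem hgs] at hsub
        exact hA.1.2 s n hsub hsum
  have hgA : g ∈ A := hA.2 hins (Set.subset_insert g A) (Set.mem_insert g A)
  exact H 1 (by simpa using hg) (by simpa using Submodule.subset_span hgA)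

lemma bohr_embed (G : Type*) [AddCommGroup G] :
    ∃ (A : Set G) (Φ : G →ₗ[ℤ] (A →₀ BohrE)) (e : A → BohrE), Function.Injective Φ ∧
      ∀ a : A, e a ≠ 0 ∧ Φ a = Finsupp.single a (e a) := by
  classical
  obtain ⟨A, hA⟩ := bohr_exists_maximal G
  choose e he using fun a : A => bohrE_exists (a : G)
  have hgb : ∀ (n : A →₀ ℤ) (b : A),
      Finsupp.linearCombination ℤ (fun a : A => Finsupp.single a (e a)) n b = n b • e b := by
    intro n b
    induction n using Finsupp.induction_linear with
    | zero => simp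
    | add f g hf hg => rw [map_add, Finsupp.add_apply, hf, hg, Finsupp.add_apply, add_smul]
    | single a m =>
      rw [Finsupp.linearCombination_single, Finsupp.smul_apply, Finsupp.single_apply,
        Finsupp.single_apply]
      split_ifs with h
      · rw [h]
      · simp
  have hind : ∀ n : A →₀ ℤ, Finsupp.linearCombination ℤ (fun a : A => (a : G)) n = 0 →
      ∀ b : A, n b • (b : G) = 0 := by
    intro n hn b
    by_cases hb : b ∈ n.support
    · have h := hA.1.2 (n.support.map (Function.Embedding.subtype _))
        (fun g => if h : g ∈ A then n ⟨g, h⟩ else 0) (by intro x; simp; tauto)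
        (by
          rw [Finset.sum_map]
          rw [Finsupp.linearCombination_apply, Finsupp.sum] at hn
          rw [← hn]
          exact Finset.sum_congr rfl fun x _ => by simp) b
        (by simpa using hb)
      simpa using h
    · rw [Finsupp.notMem_support_iff.1 hb, zero_smul]
  obtain ⟨Φ, hΦ⟩ := bohr_extend_s10 (bohrE_baer A)
    (Finsupp.linearCombination ℤ (fun a : A => (a : G)))
    (Finsupp.linearCombination ℤ (fun a : A => Finsupp.single a (e a))) (by
      intro n hn
      ext1 b
      rw [hgb]
      exact (he b _).1 (hind n hn b))
  refine ⟨A, Φ, e, ?_, fun a => ⟨?_, ?_⟩⟩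
  · rw [injective_iff_map_eq_zero]
    intro g hg
    by_contra hne
    obtain ⟨k, hk, hmem⟩ := bohr_maximal_meets hA g hne
    obtain ⟨n, hn⟩ := (Finsupp.mem_span_iff_linearCombination ℤ A _).1 hmem
    apply hk
    have h1 := hΦ n
    rw [hn, map_zsmul, hg, smul_zero] at h1
    rw [← hn, Finsupp.linearCombination_apply]
    refine Finset.sum_eq_zero fun b _ => ?_
    refine (he b _).2 ?_
    rw [← hgb, ← h1]
    rfl
  · intro h0
    have := (he a 1).2 (by simp [h0])
    rw [one_smul] at this
    exact hA.1.1 (this ▸ a.2)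
  · simpa using hΦ (Finsupp.single a 1)

lemma bohr_uncountable {G : Type*} [AddCommGroup G] [Uncountable G] :
    ∃ A : Set G, Cardinal.mk A = Cardinal.mk G ∧
      (∀ x : G, x ≠ 0 → ∃ χ : G →+ AddCircle (1 : ℝ), χ x ≠ 0 ∧
        ∀ ε : ℝ, 0 < ε → {a ∈ A | ε ≤ ‖χ a‖}.Finite) ∧
      ∃ (ψ : G →+ AddCircle (1 : ℝ)) (δ : ℝ), 0 < δ ∧ ∀ a ∈ A, δ ≤ ‖ψ a‖ := by
  classical
  obtain ⟨A, Φ, e, hΦ, he⟩ := bohr_embed G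
  have hE := bohrE_countable
  refine ⟨A, ?_, ?_, ?_⟩
  · apply le_antisymm (Cardinal.mk_set_le A)
    have hunc : Uncountable A := by
      by_contra h
      rw [not_uncountable_iff] at h
      have : Countable G := hΦ.countable
      exact not_countable (α := G) this
    have h1 := Cardinal.mk_le_of_injective hΦ
    rw [Cardinal.mk_finsupp_lift_of_infinite] at h1
    refine h1.trans (max_le (by simp) ?_)
    have h2 : Cardinal.mk BohrE ≤ Cardinal.aleph0 := Cardinal.mk_le_aleph0
    have h3 : Cardinal.aleph0 ≤ Cardinal.mk A := Cardinal.aleph0_le_mk A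
    refine le_trans ?_ h3
    simp
  · intro x hx
    have hx' : Φ x ≠ 0 := fun h => hx (hΦ (by simpa using h))
    obtain ⟨s, hs⟩ := Finsupp.ne_iff.1 hx'
    obtain ⟨θ, hθ⟩ := bohr_exists_char (a := Φ x s) (by simpa using hs)
    refine ⟨(θ.comp (Finsupp.applyAddHom s)).comp Φ.toAddMonoidHom, hθ, fun ε hε => ?_⟩
    refine (Set.finite_singleton (s : G)).subset ?_
    rintro a ⟨ha, h⟩
    by_contra hne
    have h2 : Φ a s = 0 := by
      rw [(he ⟨a, ha⟩).2, Finsupp.single_apply, if_neg]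
      rintro rfl
      exact hne rfl
    have h3 : ε ≤ ‖θ (Φ a s)‖ := h
    rw [h2, map_zero, norm_zero] at h3
    linarith
  · choose θ hθ using fun a : A => bohr_exists_char_big (he a).1
    refine ⟨(Finsupp.liftAddHom θ).comp Φ.toAddMonoidHom, 1 / 4, by norm_num, fun a ha => ?_⟩
    have h1 : (Finsupp.liftAddHom θ) (Φ a) = θ ⟨a, ha⟩ (e ⟨a, ha⟩) := by
      rw [(he ⟨a, ha⟩).2, Finsupp.liftAddHom_apply_single]
    have h2 := hθ ⟨a, ha⟩
    rw [← h1] at h2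
    exact h2

end

/-- (Kunen–Rudin) Every infinite abelian group `G` contains a set `A` with `|A| = |G|`,
relatively discrete in `G^#`, such that `0` is the only limit point of `A - A` in `G^#`. -/
theorem bohr_exists_discrete_with_unique_limit_point (G : Type*) [AddCommGroup G] [Infinite G] :
    letI := bohrTopology G
    ∃ A : Set G, Cardinal.mk A = Cardinal.mk G ∧ DiscreteTopology A ∧
      ∀ x : G, AccPt x (Filter.principal (A - A)) ↔ x = 0 := by
  rcases Classical.em (Countable G) with hG | hG
  · obtain ⟨A, hinf, h1, h2⟩ := bohr_countable (G := G)
    refine ⟨A, ?_, bohr_criterion A hinf h1 h2⟩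
    have := hinf.to_subtype
    rw [Cardinal.mk_eq_aleph0 A, Cardinal.mk_eq_aleph0 G]
  · rw [not_countable_iff] at hG
    obtain ⟨A, hcard, h1, h2⟩ := bohr_uncountable (G := G)
    refine ⟨A, hcard, bohr_criterion A ?_ h1 h2⟩
    rw [← Set.infinite_coe_iff, Cardinal.infinite_iff, hcard]
    exact Cardinal.aleph0_le_mk G
end

section
/- For distinct primes p and q, the spaces (⊕_ω ℤ/pℤ)^# and (⊕_ω ℤ/qℤ)^# are not homeomorphic, where ⊕_ω denotes the direct sum of countably many copies. -/
open scoped Pointwise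

section
open Filter Topology

namespace BohrAux

lemma baire_gen {K : Type} [Finite K] {ι : Type} [Countable ι] (O : ι → Set (ℕ → K)) (w0 : ℕ → K)
    (ho : ∀ i, ∀ w ∈ O i, ∃ m : ℕ, ∀ w' : ℕ → K, (∀ k < m, w' k = w k) → w' ∈ O i)
    (hd : ∀ i, ∀ w : ℕ → K, ∀ m : ℕ, ∃ w' ∈ O i, ∀ k < m, w' k = w k) : ∃ w, ∀ i, w ∈ O i := by
  let _ : TopologicalSpace K := ⊥
  have : DiscreteTopology K := ⟨rfl⟩
  have hB := PiNat.isTopologicalBasis_cylinders (fun _ : ℕ => K)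
  have h : Dense (⋂ i, O i) := by
    apply dense_iInter_of_isOpen
    · intro i
      rw [hB.isOpen_iff]
      intro w hw
      obtain ⟨m, hm⟩ := ho i w hw
      refine ⟨_, ⟨w, m, rfl⟩, PiNat.self_mem_cylinder _ _, fun w' hw' => hm w' hw'⟩
    · intro i
      rw [hB.dense_iff]
      rintro _ ⟨w, m, rfl⟩ -
      obtain ⟨w', h1, h2⟩ := hd i w m
      exact ⟨w', h2, h1⟩
  have : Nonempty (ℕ → K) := ⟨w0⟩
  obtain ⟨w, hw⟩ := h.nonempty
  exact ⟨w, by simpa using hw⟩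

lemma diag (Q : Finset ℕ → ℕ → Prop) (h : ∀ A : Finset ℕ, ∃ i, (∀ j ∈ A, j < i) ∧ Q A i) :
    ∃ φ : ℕ → ℕ, StrictMono φ ∧ ∀ n, Q ((Finset.range n).image φ) (φ n) := by
  choose F hF1 hF2 using h
  let A : ℕ → Finset ℕ := fun n => Nat.rec ∅ (fun _ B => insert (F B) B) n
  have hA : ∀ n, A (n+1) = insert (F (A n)) (A n) := fun n => rfl
  let φ : ℕ → ℕ := fun n => F (A n)
  have key : ∀ n, (Finset.range n).image φ = A n := by
    intro n
    induction n with
    | zero => rfl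
    | succ n ih => rw [Finset.range_add_one, Finset.image_insert, ih, hA]
  refine ⟨φ, strictMono_nat_of_lt_succ fun n => ?_, fun n => ?_⟩
  · apply hF1 (A (n+1))
    rw [hA]; exact Finset.mem_insert_self _ _
  · rw [key]; exact hF2 _

lemma ultra_ex {p : ℕ → Prop} (A : Finset ℕ) (h : ∀ᶠ i in (hyperfilter ℕ : Filter ℕ), p i) :
    ∃ i, (∀ j ∈ A, j < i) ∧ p i := by
  have h1 : ∀ᶠ i in (hyperfilter ℕ : Filter ℕ), ∀ j ∈ A, j < i := by
    rw [Finset.eventually_all]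
    intro j _
    have : ∀ᶠ i in (cofinite : Filter ℕ), j < i := by
      rw [Nat.cofinite_eq_atTop]; exact eventually_gt_atTop j
    exact hyperfilter_le_cofinite this
  exact (h1.and h).exists

lemma dich_nat {V : Type} (F : ℕ → ℕ → V) : ∃ φ : ℕ → ℕ, StrictMono φ ∧ ∀ m,
    (∃ c, ∀ᶠ i in atTop, F m (φ i) = c) ∨ (∀ W : Set V, W.Finite → ∀ᶠ i in atTop, F m (φ i) ∉ W) := by
  classical
  have h := diag (fun A i => ∀ m ≤ A.card,
    (∀ c, (∀ᶠ i in (hyperfilter ℕ : Filter ℕ), F m i = c) → F m i = c) ∧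
    ((¬ ∃ c, ∀ᶠ i in (hyperfilter ℕ : Filter ℕ), F m i = c) → ∀ j ∈ A, F m i ≠ F m j)) ?_
  · obtain ⟨φ, hφ, H⟩ := h
    refine ⟨φ, hφ, fun m => ?_⟩
    have hc : ∀ n, ((Finset.range n).image φ).card = n := fun n => by
      rw [Finset.card_image_of_injective _ hφ.injective, Finset.card_range]
    by_cases hm : ∃ c, ∀ᶠ i in (hyperfilter ℕ : Filter ℕ), F m i = c
    · left
      obtain ⟨c, hc'⟩ := hm
      refine ⟨c, ?_⟩
      filter_upwards [eventually_ge_atTop m] with i hi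
      exact (H i m (by rw [hc]; exact hi)).1 c hc'
    · right
      intro W hW
      have hinj : Set.InjOn (fun i => F m (φ i)) {i | m ≤ i} := by
        intro i hi j hj hij
        by_contra hne
        rcases lt_or_gt_of_ne hne with h | h
        · exact (H j m (by rw [hc]; exact hj)).2 hm (φ i)
            (Finset.mem_image_of_mem _ (Finset.mem_range.2 h)) hij.symm
        · exact (H i m (by rw [hc]; exact hi)).2 hm (φ j)
            (Finset.mem_image_of_mem _ (Finset.mem_range.2 h)) hij
      have hfin : ({i | m ≤ i} ∩ (fun i => F m (φ i)) ⁻¹' W).Finite := by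
        apply Set.Finite.of_finite_image (f := fun i => F m (φ i))
        · exact hW.subset (by rintro _ ⟨i, hi, rfl⟩; exact hi.2)
        · exact hinj.mono Set.inter_subset_left
      have := hfin.compl_mem_cofinite
      rw [Nat.cofinite_eq_atTop] at this
      filter_upwards [this, eventually_ge_atTop m] with i hi hi2 hi3
      exact hi ⟨hi2, hi3⟩
  · intro A
    apply ultra_ex
    have : ∀ m ∈ Finset.range (A.card + 1), ∀ᶠ i in (hyperfilter ℕ : Filter ℕ), 
      (∀ c, (∀ᶠ i in (hyperfilter ℕ : Filter ℕ), F m i = c) → F m i = c) ∧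
      ((¬ ∃ c, ∀ᶠ i in (hyperfilter ℕ : Filter ℕ), F m i = c) → ∀ j ∈ A, F m i ≠ F m j) := by
      intro m _
      by_cases hm : ∃ c, ∀ᶠ i in (hyperfilter ℕ : Filter ℕ), F m i = c
      · obtain ⟨c, hc⟩ := hm
        filter_upwards [hc] with i hi
        refine ⟨fun c' hc' => ?_, fun h => (h ⟨c, hc⟩).elim⟩
        obtain ⟨j, hj1, hj2⟩ := (hc.and hc').exists
        rw [hi, ← hj1, hj2]
      · have h2 : ∀ᶠ i in (hyperfilter ℕ : Filter ℕ), ∀ j ∈ A, F m i ≠ F m j := by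
          rw [Finset.eventually_all]
          intro j _
          refine Ultrafilter.eventually_not.2 fun h => ?_
          exact hm ⟨_, h⟩
        filter_upwards [h2] with i hi
        exact ⟨fun c hc => (hm ⟨c, hc⟩).elim, fun _ => hi⟩
    rw [← Finset.eventually_all] at this
    filter_upwards [this] with i hi m hm
    exact hi m (Finset.mem_range.2 (by omega))

lemma dich {V ι : Type} [Countable ι] (F : ι → ℕ → V) : ∃ φ : ℕ → ℕ, StrictMono φ ∧ ∀ m,
    (∃ c, ∀ᶠ i in atTop, F m (φ i) = c) ∨ (∀ W : Set V, W.Finite → ∀ᶠ i in atTop, F m (φ i) ∉ W) := by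
  cases isEmpty_or_nonempty ι
  · exact ⟨id, strictMono_id, fun m => isEmptyElim m⟩
  · obtain ⟨e, he⟩ := exists_surjective_nat ι
    obtain ⟨φ, h1, h2⟩ := dich_nat (fun m => F (e m))
    refine ⟨φ, h1, fun m => ?_⟩
    obtain ⟨k, rfl⟩ := he m
    exact h2 k

lemma strictMono_snoc {n : ℕ} {s : Fin n → ℕ} {i : ℕ} (hs : StrictMono s) (hi : ∀ k, s k < i) :
    StrictMono (Fin.snoc s i : Fin (n+1) → ℕ) := by
  intro a b hab
  induction b using Fin.lastCases with
  | last =>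
    induction a using Fin.lastCases with
    | last => exact absurd hab (lt_irrefl _)
    | cast a => simpa using hi a
  | cast b =>
    induction a using Fin.lastCases with
    | last => exact absurd hab (not_lt.2 (Fin.le_last _))
    | cast a => simpa using hs (by simpa using hab)

lemma comp_snoc' {n : ℕ} (φ : ℕ → ℕ) (s : Fin n → ℕ) (i : ℕ) :
    φ ∘ (Fin.snoc s i : Fin (n+1) → ℕ) = Fin.snoc (φ ∘ s) (φ i) := by
  ext k
  induction k using Fin.lastCases <;> simp

/-- Diagonal argument for tuples. -/
lemma diag_tuple {n : ℕ} (R : (Fin n → ℕ) → ℕ → Prop)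
    (h : ∀ s, StrictMono s → ∀ᶠ i in (hyperfilter ℕ : Filter ℕ), R s i) :
    ∃ φ : ℕ → ℕ, StrictMono φ ∧ ∀ s i, StrictMono s → (∀ k, s k < i) → R (φ ∘ s) (φ i) := by
  classical
  obtain ⟨φ, h1, h2⟩ := diag
    (fun A i => ∀ s ∈ Fintype.piFinset (fun _ : Fin n => A), StrictMono s → R s i) (by
      intro A
      apply ultra_ex
      rw [Finset.eventually_all]
      intro s _
      by_cases hs : StrictMono s
      · filter_upwards [h s hs] with i hi _ using hi
      · exact Eventually.of_forall fun i h => absurd h hs)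
  refine ⟨φ, h1, fun s i hs hi => h2 i _ ?_ (h1.comp hs)⟩
  rw [Fintype.mem_piFinset]
  intro k
  exact Finset.mem_image_of_mem _ (Finset.mem_range.2 (hi k))

lemma hyper_le_atTop : (hyperfilter ℕ : Filter ℕ) ≤ atTop := by
  rw [← Nat.cofinite_eq_atTop]; exact hyperfilter_le_cofinite

lemma ramsey {κ : Type} [Finite κ] (n : ℕ) : ∀ (col : (Fin n → ℕ) → κ), 
    ∃ φ : ℕ → ℕ, StrictMono φ ∧ ∃ c, ∀ s, StrictMono s → col (φ ∘ s) = c := by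
  induction n with
  | zero => 
    intro col
    exact ⟨id, strictMono_id, col Fin.elim0, fun s _ => by congr 1; exact Subsingleton.elim _ _⟩
  | succ n ih =>
    intro col
    have : ∀ s : Fin n → ℕ, ∃ c, ∀ᶠ i in (hyperfilter ℕ : Filter ℕ), col (Fin.snoc s i) = c := by
      intro s
      rw [← Ultrafilter.eventually_exists_iff]
      exact Eventually.of_forall fun i => ⟨_, rfl⟩
    choose c hc using this
    obtain ⟨φ, h1, h2⟩ := diag_tuple (fun s i => col (Fin.snoc s i) = c s) (fun s _ => hc s)
    obtain ⟨ψ, h3, c0, h4⟩ := ih (fun s => c (φ ∘ s))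
    refine ⟨φ ∘ ψ, h1.comp h3, c0, fun s hs => ?_⟩
    have e : s = Fin.snoc (Fin.init s) (s (Fin.last n)) := by simp
    have hi : StrictMono (Fin.init s) := fun a b hab => hs (by simpa using hab)
    rw [← h4 (Fin.init s) hi]
    rw [← h2 (ψ ∘ Fin.init s) (ψ (s (Fin.last n))) (h3.comp hi) (fun k => h3 (hs (Fin.castSucc_lt_last k)))]
    congr 1
    conv_lhs => rw [e]
    rw [comp_snoc']
    rfl

lemma ramsey_fin {κ : Type} (n : ℕ) (col : (Fin n → ℕ) → κ)
    (hf : (col '' {s | StrictMono s}).Finite) : 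
    ∃ φ : ℕ → ℕ, StrictMono φ ∧ ∃ c, ∀ s, StrictMono s → col (φ ∘ s) = c := by
  classical
  have s0 : StrictMono (fun k : Fin n => (k : ℕ)) := fun a b h => h
  set T := col '' {s | StrictMono s} with hT
  have : Finite T := hf
  let t0 : T := ⟨_, ⟨_, s0, rfl⟩⟩
  obtain ⟨φ, h1, c, h2⟩ := ramsey n (fun s => if h : StrictMono s then (⟨col s, ⟨s, h, rfl⟩⟩ : T) else t0)
  refine ⟨φ, h1, c, fun s hs => ?_⟩
  have := h2 s hs
  rw [dif_pos (h1.comp hs)] at this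
  rw [← this]

lemma inf_colors {κ : Type} [Finite κ] (c : ℕ → κ) : 
    ∃ M, ∀ i ≥ M, ∃ᶠ j in atTop, c j = c i := by
  have : ∀ᶠ i in (atTop : Filter ℕ), ∀ l : κ, (¬ ∃ᶠ j in atTop, c j = l) → c i ≠ l := by
    rw [eventually_all]
    intro l
    by_cases h : ∃ᶠ j in atTop, c j = l
    · exact Eventually.of_forall fun i h' => absurd h h'
    · rw [not_frequently] at h
      filter_upwards [h] with i hi _ using hi
  obtain ⟨M, hM⟩ := eventually_atTop.1 this
  refine ⟨M, fun i hi => ?_⟩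
  by_contra h
  exact hM i hi _ h rfl

lemma pick {K Y : Type} [Field K] [Finite K] [AddCommGroup Y] [Module K Y] (m : ℕ) :
    ∀ Z : Fin m → Set Y, (∀ l, (Z l).Infinite) → ∃ y : Fin m → Y, (∀ l, y l ∈ Z l) ∧ 
      LinearIndependent K y := by
  induction m with
  | zero => intro Z _; exact ⟨Fin.elim0, fun l => l.elim0, linearIndependent_empty_type⟩
  | succ m ih =>
    intro Z hZ
    obtain ⟨y, h1, h2⟩ := ih (fun l => Z l.castSucc) (fun l => hZ _)
    have : Finite (Submodule.span K (Set.range y)) := by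
      have : Module.Finite K (Submodule.span K (Set.range y)) := 
        Module.Finite.span_of_finite K (Set.finite_range y)
      exact Module.finite_of_finite K
    obtain ⟨x, hx1, hx2⟩ := (hZ (Fin.last m)).exists_notMem_finite 
      (Set.toFinite (Submodule.span K (Set.range y) : Set Y))
    refine ⟨Fin.snoc y x, fun l => ?_, linearIndependent_finSnoc.2 ⟨h2, hx2⟩⟩
    induction l using Fin.lastCases with
    | last => simpa using hx1
    | cast l => simpa using h1 l

end BohrAux

namespace BohrAux

set_option linter.unusedSectionVars false

section
variable {K : Type} [Field K] [Finite K]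

/-- Extending a functional. -/
lemma exists_functional {V : Type} [AddCommGroup V] [Module K V] (W : Submodule K V) (χ0 : V →ₗ[K] K)
    {m : ℕ} (v : Fin m → V) (t : Fin m → K)
    (hv : ∀ a : Fin m → K, a ≠ 0 → ∑ l, a l • v l ∉ W) :
    ∃ χ : V →ₗ[K] K, (∀ x ∈ W, χ x = χ0 x) ∧ ∀ l, χ (v l) = t l := by
  have hli : LinearIndependent K (fun l => W.mkQ (v l)) := by
    rw [Fintype.linearIndependent_iff]
    intro a ha
    by_contra h
    have h0 : a ≠ 0 := by rintro rfl; exact h (fun _ => rfl)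
    apply hv a h0
    rw [← Submodule.ker_mkQ W, LinearMap.mem_ker, map_sum]
    simpa using ha
  let B := Module.Basis.span hli
  let ψ0 := B.constr K (fun l => t l - χ0 (v l))
  obtain ⟨ψ, hψ⟩ := LinearMap.exists_extend ψ0
  have key : ∀ l, ψ (W.mkQ (v l)) = t l - χ0 (v l) := by
    intro l
    have h1 : ψ (B l : V ⧸ W) = ψ0 (B l) := by rw [← hψ]; rfl
    rw [Module.Basis.constr_basis] at h1
    rw [← h1, Module.Basis.span_apply]
  refine ⟨χ0 + ψ ∘ₗ W.mkQ, fun x hx => ?_, fun l => ?_⟩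
  · have : W.mkQ x = 0 := by simpa using hx
    rw [LinearMap.add_apply, LinearMap.comp_apply, this, map_zero, add_zero]
  · rw [LinearMap.add_apply, LinearMap.comp_apply, key]; ring

/-- functional with coordinates `w` -/
noncomputable def fn (w : ℕ → K) : (ℕ →₀ K) →ₗ[K] K := Finsupp.linearCombination K w

lemma fn_congr {w w' : ℕ → K} {m : ℕ} (h : ∀ k < m, w' k = w k) (v : ℕ →₀ K)
    (hv : ∀ k ∈ v.support, k < m) : fn w' v = fn w v := by
  unfold fn
  rw [Finsupp.linearCombination_apply, Finsupp.linearCombination_apply]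
  exact Finsupp.sum_congr fun k hk => by rw [h k (hv k hk)]

lemma fn_eq (χ : (ℕ →₀ K) →ₗ[K] K) : fn (fun k => χ (Finsupp.single k 1)) = χ := by
  ext k
  simp [fn]

lemma supp_bound (v : ℕ →₀ K) : ∃ m, ∀ k ∈ v.support, k < m :=
  ⟨v.support.sup id + 1, fun _ hk => Nat.lt_succ_of_le (Finset.le_sup (f := id) hk)⟩

lemma supp_bound_fin {ι : Type} [Finite ι] (v : ι → ℕ →₀ K) :
    ∃ m, ∀ l, ∀ k ∈ (v l).support, k < m := by
  choose m hm using fun l => supp_bound (v l)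
  obtain ⟨M, hM⟩ := (Set.finite_range m).bddAbove
  exact ⟨M, fun l k hk => (hm l k hk).trans_le (hM ⟨l, rfl⟩)⟩

/-- Vectors supported below `m`. -/
noncomputable def low (K : Type) [Field K] (m : ℕ) : Submodule K (ℕ →₀ K) :=
  Finsupp.supported K K {k | k < m}

lemma low_finite (m : ℕ) : (low K m : Set (ℕ →₀ K)).Finite := by
  apply Set.Finite.of_finite_image (f := fun (v : ℕ →₀ K) (k : Fin m) => v k) (Set.toFinite _)
  intro v hv w hw h
  ext k
  by_cases hk : k < m
  · exact congrFun h ⟨k, hk⟩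
  · rw [(Finsupp.mem_supported' K _).1 hv k hk, (Finsupp.mem_supported' K _).1 hw k hk]

/-- If every functional is eventually constant along a sequence then so is the sequence. -/
lemma ev_const (N : ℕ → ℕ →₀ K)
    (h : ∀ χ : (ℕ →₀ K) →ₗ[K] K, ∃ c, ∀ᶠ i in atTop, χ (N i) = c) :
    ∃ c, ∀ᶠ i in atTop, N i = c := by
  by_contra hne
  obtain ⟨w, hw⟩ := baire_gen (K := K) (ι := ℕ)
    (fun m => {w | ∃ i j, m ≤ i ∧ m ≤ j ∧ fn w (N i) ≠ fn w (N j)}) (fun _ => 0) (by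
      rintro m w ⟨i, j, hi, hj, hij⟩
      obtain ⟨m1, h1⟩ := supp_bound (N i)
      obtain ⟨m2, h2⟩ := supp_bound (N j)
      refine ⟨max m1 m2, fun w' hw' => ⟨i, j, hi, hj, ?_⟩⟩
      rw [fn_congr hw' _ fun k hk => (h1 k hk).trans_le (le_max_left _ _),
        fn_congr hw' _ fun k hk => (h2 k hk).trans_le (le_max_right _ _)]
      exact hij) (by
      intro m w m0
      have h1 : ∀ᶠ i in atTop, ∀ k < m0, ∃ c, ∀ᶠ j in atTop, N j k = c ∧ N i k = c := by
        have : ∀ k ∈ Finset.range m0, ∀ᶠ i in atTop, ∃ c, ∀ᶠ j in atTop, N j k = c ∧ N i k = c := by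
          intro k _
          obtain ⟨c, hc⟩ := h (Finsupp.lapply k)
          filter_upwards [hc] with i hi
          refine ⟨c, ?_⟩
          filter_upwards [hc] with j hj
          exact ⟨hj, hi⟩
        rw [← Finset.eventually_all] at this
        filter_upwards [this] with i hi k hk using hi k (Finset.mem_range.2 hk)
      obtain ⟨M, hM⟩ := eventually_atTop.1 (h1.and (eventually_ge_atTop m))
      have h2 : ∃ i j, M ≤ i ∧ M ≤ j ∧ N i ≠ N j := by
        by_contra hcon
        push Not at hcon
        exact hne ⟨N M, eventually_atTop.2 ⟨M, fun i hi => hcon i M hi le_rfl⟩⟩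
      obtain ⟨i, j, hi, hj, hij⟩ := h2
      have h3 : ∀ k < m0, N i k = N j k := by
        intro k hk
        obtain ⟨c, hc⟩ := (hM i hi).1 k hk
        obtain ⟨c', hc'⟩ := (hM j hj).1 k hk
        obtain ⟨l, hl, hl'⟩ := (hc.and hc').exists
        rw [hl.2, hl'.2, ← hl.1, ← hl'.1]
      have h4 : N i - N j ∉ low K m0 := by
        intro hmem
        apply hij
        ext k
        by_cases hk : k < m0
        · exact h3 k hk
        · have := (Finsupp.mem_supported' K _).1 hmem k hk
          simpa [sub_eq_zero] using this
      obtain ⟨χ, hχ1, hχ2⟩ := exists_functional (low K m0) (fn w) (fun _ : Fin 1 => N i - N j)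
        (fun _ => 1) (by
          intro a ha hmem
          apply h4
          have ha0 : a 0 ≠ 0 := by
            intro h0; apply ha; ext l; rw [Subsingleton.elim l 0, h0]; rfl
          have := (low K m0).smul_mem (a 0)⁻¹ hmem
          simpa [smul_smul, ha0] using this)
      refine ⟨fun k => χ (Finsupp.single k 1), ⟨i, j, (hM i hi).2, (hM j hj).2, ?_⟩, ?_⟩
      · rw [fn_eq, ← sub_ne_zero, ← map_sub, hχ2 0]; exact one_ne_zero
      · intro k hk
        refine (hχ1 _ (Finsupp.single_mem_supported K _ hk)).trans ?_
        simp [fn])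
  obtain ⟨c, hc⟩ := h (fn w)
  obtain ⟨M, hM⟩ := eventually_atTop.1 hc
  obtain ⟨i, j, hi, hj, hij⟩ := hw M
  exact hij ((hM i hi).trans (hM j hj).symm)

/-- Monochromatic tuples give constant values. -/
def PP {n : ℕ} (g : (Fin n → ℕ) → ℕ →₀ K) : Prop :=
  ∀ χ : (ℕ →₀ K) →ₗ[K] K, ∃ (κ : Type) (_ : Finite κ) (c : ℕ → κ) (M : ℕ),
    ∀ s s' : Fin n → ℕ, StrictMono s → StrictMono s' → ∀ l,
      (∀ k, M ≤ s k ∧ c (s k) = l) → (∀ k, M ≤ s' k ∧ c (s' k) = l) → χ (g s) = χ (g s')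

lemma PP.comp {n : ℕ} {g : (Fin n → ℕ) → ℕ →₀ K} (h : PP g) {φ : ℕ → ℕ} (hφ : StrictMono φ) :
    PP (fun s => g (φ ∘ s)) := by
  intro χ
  obtain ⟨κ, hκ, c, M, H⟩ := h χ
  refine ⟨κ, hκ, c ∘ φ, M, fun s s' hs hs' l h1 h2 => ?_⟩
  exact H _ _ (hφ.comp hs) (hφ.comp hs') l
    (fun k => ⟨(h1 k).1.trans (hφ.id_le _), (h1 k).2⟩)
    (fun k => ⟨(h2 k).1.trans (hφ.id_le _), (h2 k).2⟩)

/-- germ function of a combination -/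
noncomputable def FF {n : ℕ} (g : (Fin (n+1) → ℕ) → ℕ →₀ K) (a : (Fin n → ℕ) →₀ K) (i : ℕ) : ℕ →₀ K :=
  Finsupp.linearCombination K (fun s : Fin n → ℕ => g (Fin.snoc s i)) a

/-- combinations with eventually constant germ -/
noncomputable def KK {n : ℕ} (g : (Fin (n+1) → ℕ) → ℕ →₀ K) : Submodule K ((Fin n → ℕ) →₀ K) where
  carrier := {a | ∃ c, ∀ᶠ i in atTop, FF g a i = c}
  zero_mem' := ⟨0, Eventually.of_forall fun i => by simp [FF]⟩
  add_mem' := by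
    rintro a b ⟨c, hc⟩ ⟨d, hd⟩
    refine ⟨c + d, ?_⟩
    filter_upwards [hc, hd] with i h1 h2
    rw [← h1, ← h2]; simp [FF]
  smul_mem' := by
    rintro r a ⟨c, hc⟩
    refine ⟨r • c, ?_⟩
    filter_upwards [hc] with i h1
    rw [← h1]; simp [FF]

noncomputable def lam {n : ℕ} (g : (Fin (n+1) → ℕ) → ℕ →₀ K) (s : Fin n → ℕ) :
    ((Fin n → ℕ) →₀ K) ⧸ KK g := (KK g).mkQ (Finsupp.single s 1)

def Dich {n : ℕ} (g : (Fin (n+1) → ℕ) → ℕ →₀ K) : Prop :=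
  ∀ a, (∃ c, ∀ᶠ i in atTop, FF g a i = c) ∨
    (∀ W : Set (ℕ →₀ K), W.Finite → ∀ᶠ i in atTop, FF g a i ∉ W)

lemma exists_dich {n : ℕ} (g : (Fin (n+1) → ℕ) → ℕ →₀ K) :
    ∃ φ : ℕ → ℕ, StrictMono φ ∧ Dich (fun s => g (φ ∘ s)) := by
  have : Countable K := Finite.to_countable
  obtain ⟨φ, h1, h2⟩ := dich (FF g)
  refine ⟨φ, h1, fun a => ?_⟩
  have key : ∀ i, FF (fun s => g (φ ∘ s)) a i = FF g (a.mapDomain (fun s => φ ∘ s)) (φ i) := by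
    intro i
    unfold FF
    rw [Finsupp.linearCombination_mapDomain]
    congr 2
    ext1 s
    exact congrArg g (comp_snoc' φ s i)
  simp only [key]
  exact h2 _

lemma generic {n : ℕ} (g : (Fin (n+1) → ℕ) → ℕ →₀ K) (hg : Dich g) :
    ∃ χ : (ℕ →₀ K) →ₗ[K] K, ∀ (m : ℕ) (s : Fin m → Fin n → ℕ) (t : Fin m → K) (N : ℕ),
      LinearIndependent K (fun l => lam g (s l)) →
        ∃ i ≥ N, ∀ l, χ (g (Fin.snoc (s l) i)) = t l := by
  have : Countable K := Finite.to_countable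
  obtain ⟨w, hw⟩ := baire_gen (K := K)
    (ι := Σ m : ℕ, (Fin m → Fin n → ℕ) × (Fin m → K) × ℕ)
    (fun T => {w | LinearIndependent K (fun l => lam g (T.2.1 l)) →
        ∃ i ≥ T.2.2.2, ∀ l, fn w (g (Fin.snoc (T.2.1 l) i)) = T.2.2.1 l}) (fun _ => 0) (by
      rintro ⟨m, s, t, N⟩ w hw
      by_cases hli : LinearIndependent K (fun l => lam g (s l))
      · obtain ⟨i, hi, h⟩ := hw hli
        obtain ⟨M, hM⟩ := supp_bound_fin (fun l => g (Fin.snoc (s l) i))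
        refine ⟨M, fun w' hw' _ => ⟨i, hi, fun l => ?_⟩⟩
        rw [fn_congr hw' _ (hM l)]
        exact h l
      · exact ⟨0, fun w' _ h => absurd h hli⟩) (by
      rintro ⟨m, s, t, N⟩ w M
      by_cases hli : LinearIndependent K (fun l => lam g (s l))
      · have h1 : ∀ a : Fin m → K, a ≠ 0 →
            ∀ᶠ i in atTop, ∑ l, a l • g (Fin.snoc (s l) i) ∉ low K M := by
          intro a ha
          have e : ∀ i, FF g (∑ l, a l • Finsupp.single (s l) 1) i
              = ∑ l, a l • g (Fin.snoc (s l) i) := by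
            intro i; simp [FF, map_sum]
          rcases hg (∑ l, a l • Finsupp.single (s l) 1) with h | h
          · exfalso
            apply ha
            rw [Fintype.linearIndependent_iff] at hli
            ext l
            refine hli a ?_ l
            have hmem : (∑ l, a l • Finsupp.single (s l) (1:K)) ∈ KK g := h
            rw [← Submodule.ker_mkQ (KK g), LinearMap.mem_ker, map_sum] at hmem
            simpa only [map_smul, lam] using hmem
          · simpa only [e, SetLike.mem_coe] using h _ (low_finite M)
        have h2 : ∀ᶠ i in atTop, ∀ a : Fin m → K, a ≠ 0 →
            ∑ l, a l • g (Fin.snoc (s l) i) ∉ low K M := by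
          rw [eventually_all]
          intro a
          by_cases ha : a = 0
          · exact Eventually.of_forall fun i h => absurd ha h
          · filter_upwards [h1 a ha] with i hi _ using hi
        obtain ⟨i, hi, hiN⟩ := (h2.and (eventually_ge_atTop N)).exists
        obtain ⟨χ, hχ1, hχ2⟩ := exists_functional (low K M) (fn w) _ t hi
        refine ⟨fun k => χ (Finsupp.single k 1), fun _ => ⟨i, hiN, fun l => ?_⟩, fun k hk => ?_⟩
        · rw [fn_eq]; exact hχ2 l
        · refine (hχ1 _ (Finsupp.single_mem_supported K _ hk)).trans ?_
          simp [fn]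
      · exact ⟨w, fun h => absurd h hli, fun _ _ => rfl⟩)
  exact ⟨fn w, fun m s t N => hw ⟨m, s, t, N⟩⟩

lemma lam_finite {n : ℕ} (g : (Fin (n+1) → ℕ) → ℕ →₀ K) (hg : Dich g) (hP : PP g) :
    ∃ ψ : ℕ → ℕ, StrictMono ψ ∧ ((fun s => lam g (ψ ∘ s)) '' {s | StrictMono s}).Finite := by
  by_contra hcon
  push Not at hcon
  obtain ⟨χ, hχ⟩ := generic g hg
  obtain ⟨κ, hκ, c, M, H⟩ := hP χ
  obtain ⟨M1, hM1⟩ := inf_colors c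
  let κ' := {l : κ // ∃ᶠ j in atTop, c j = l}
  obtain ⟨m, ⟨e⟩⟩ := Finite.exists_equiv_fin κ'
  have h1 : ∀ l : κ', ∃ ψ : ℕ → ℕ, StrictMono ψ ∧ ∀ j, M ≤ ψ j ∧ c (ψ j) = l.1 := by
    intro l
    exact extraction_of_frequently_atTop ((eventually_ge_atTop M).and_frequently l.2)
  choose ψ hψ1 hψ2 using h1
  obtain ⟨y, hy1, hy2⟩ := pick (K := K) m
    (fun l => (fun s => lam g (ψ (e.symm l) ∘ s)) '' {s | StrictMono s})
    (fun l => hcon _ (hψ1 _))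
  choose s hs1 hs2 using hy1
  obtain rfl : (fun l => lam g (ψ (e.symm l) ∘ s l)) = y := funext hs2
  -- bound
  have hb : ∀ l, ∃ B, ∀ k, ψ (e.symm l) (s l k) < B := by
    intro l
    obtain ⟨B, hB⟩ := (Set.finite_range (fun k => ψ (e.symm l) (s l k))).bddAbove
    exact ⟨B + 1, fun k => Nat.lt_succ_of_le (hB ⟨k, rfl⟩)⟩
  choose B hB using hb
  obtain ⟨B', hB'⟩ := (Set.finite_range B).bddAbove
  have hj : ∀ l, ∃ j, c j = (e.symm l).1 ∧ max M (B l) ≤ j := by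
    intro l
    exact ((e.symm l).2.and_eventually (eventually_ge_atTop _)).exists
  choose j hj1 hj2 using hj
  obtain ⟨i, hi, hit⟩ := hχ m (fun l => ψ (e.symm l) ∘ s l)
    (fun l => χ (g (Fin.snoc (ψ (e.symm l) ∘ s l) (j l))) + 1) (max (max M M1) B') hy2
  let l := e ⟨c i, hM1 i (by omega)⟩
  have hl : (e.symm l).1 = c i := by simp [l]
  have hBl : B l ≤ B' := hB' ⟨l, rfl⟩
  have hstr : StrictMono (ψ (e.symm l) ∘ s l) := (hψ1 _).comp (hs1 l)
  have hcol : ∀ i', M ≤ i' → c i' = c i → ∀ k, M ≤ (Fin.snoc (ψ (e.symm l) ∘ s l) i' : Fin (n+1) → ℕ) k ∧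
      c ((Fin.snoc (ψ (e.symm l) ∘ s l) i' : Fin (n+1) → ℕ) k) = c i := by
    intro i' h1 h2 k
    induction k using Fin.lastCases with
    | last => simpa using ⟨h1, h2⟩
    | cast k =>
      have := hψ2 (e.symm l) (s l k)
      rw [hl] at this
      simpa using this
  have h2 := H (Fin.snoc (ψ (e.symm l) ∘ s l) i) (Fin.snoc (ψ (e.symm l) ∘ s l) (j l))
    (strictMono_snoc hstr fun k => by have := hB l k; simp only [Function.comp]; omega)
    (strictMono_snoc hstr fun k => by
      have := hB l k; have := hj2 l; simp only [Function.comp]; omega)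
    (c i) (hcol i (by omega) rfl) (hcol (j l) (by have := hj2 l; omega) (by rw [hj1, hl]))
  have h3 := hit l
  rw [h2] at h3
  simp at h3

theorem separated (n : ℕ) : ∀ (g : (Fin n → ℕ) → ℕ →₀ K), PP g →
    ∃ φ : ℕ → ℕ, StrictMono φ ∧ ∃ (v0 : ℕ →₀ K) (d : Fin n → ℕ → ℕ →₀ K),
      ∀ s, StrictMono s → g (φ ∘ s) = v0 + ∑ k, d k (s k) := by
  induction n with
  | zero =>
    intro g _
    refine ⟨id, strictMono_id, g Fin.elim0, fun _ _ => 0, fun s _ => ?_⟩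
    simp only [Finset.univ_eq_empty, Finset.sum_empty, add_zero]
    congr 1; exact Subsingleton.elim _ _
  | succ n ih =>
    intro g0 hP0
    obtain ⟨φ1, hφ1, hD⟩ := exists_dich g0
    have hP := hP0.comp hφ1
    set g : (Fin (n+1) → ℕ) → ℕ →₀ K := fun s => g0 (φ1 ∘ s) with hgdef
    obtain ⟨ψ, hψ, hfin⟩ := lam_finite g hD hP
    obtain ⟨ψ', hψ', y0, hy⟩ := ramsey_fin n (fun s => lam g (ψ ∘ s)) hfin
    set φ := ψ ∘ ψ' with hφdef
    have hφ : StrictMono φ := hψ.comp hψ'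
    let s0 : Fin n → ℕ := fun k => k
    have hs0 : StrictMono s0 := fun a b h => h
    let b : ℕ → ℕ →₀ K := fun i => g (Fin.snoc (φ ∘ s0) i)
    have hv : ∀ s : Fin n → ℕ, ∃ v, StrictMono s →
        ∀ᶠ i in atTop, g (Fin.snoc (φ ∘ s) i) = v + b i := by
      intro s
      by_cases hs : StrictMono s
      · have h1 : lam g (φ ∘ s) = lam g (φ ∘ s0) := (hy s hs).trans (hy s0 hs0).symm
        have h2 : Finsupp.single (φ ∘ s) (1:K) - Finsupp.single (φ ∘ s0) 1 ∈ KK g :=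
          (Submodule.Quotient.eq _).1 h1
        obtain ⟨v, hv⟩ := h2
        refine ⟨v, fun _ => ?_⟩
        filter_upwards [hv] with i hi
        rw [← hi]
        simp [FF, b]
      · exact ⟨0, fun h => absurd h hs⟩
    choose v hv using hv
    obtain ⟨θ, hθ, H⟩ := diag_tuple (fun s i => g (Fin.snoc (φ ∘ s) (φ i)) = v s + b (φ i))
      (fun s hs => hyper_le_atTop (hφ.tendsto_atTop.eventually (hv s hs)))
    have hPv : PP (fun s => v (θ ∘ s)) := by
      intro χ
      obtain ⟨κ, hκ, c, M, hc⟩ := (hP.comp (hφ.comp hθ)) χ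
      let c' : ℕ → κ × K := fun i => (c i, χ (b (φ (θ i))))
      obtain ⟨M1, hM1⟩ := inf_colors c'
      refine ⟨κ × K, inferInstance, c', max M M1, ?_⟩
      intro s s' hs hs' l h1 h2
      rcases Nat.eq_zero_or_pos n with hn | hn
      · subst hn; rw [Subsingleton.elim s s']
      have hl : ∃ᶠ j in atTop, c' j = l := by
        have := hM1 (s ⟨0, hn⟩) (by have := (h1 ⟨0, hn⟩).1; omega)
        rwa [(h1 ⟨0, hn⟩).2] at this
      have hbig : ∀ s : Fin n → ℕ, ∀ᶠ j in atTop, ∀ k, s k < j := by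
        intro s; rw [eventually_all]; intro k; exact eventually_gt_atTop _
      obtain ⟨i, hi, hi1, hi2, hi3⟩ := (hl.and_eventually ((eventually_ge_atTop M).and
        ((hbig s).and (hbig s')))).exists
      have hcol : ∀ s : Fin n → ℕ, (∀ k, max M M1 ≤ s k ∧ c' (s k) = l) → ∀ k,
          M ≤ (Fin.snoc s i : Fin (n+1) → ℕ) k ∧ c ((Fin.snoc s i : Fin (n+1) → ℕ) k) = l.1 := by
        intro s hs k
        induction k using Fin.lastCases with
        | last => simpa using ⟨hi1, congrArg Prod.fst hi⟩
        | cast k => simpa using ⟨le_trans (le_max_left _ _) (hs k).1, congrArg Prod.fst (hs k).2⟩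
      have h3 := hc (Fin.snoc s i) (Fin.snoc s' i) (strictMono_snoc hs hi2)
        (strictMono_snoc hs' hi3) l.1 (hcol s h1) (hcol s' h2)
      simp only [comp_snoc'] at h3
      have e1 := H s i hs hi2
      have e2 := H s' i hs' hi3
      have e1' : g (Fin.snoc ((φ ∘ θ) ∘ s) ((φ ∘ θ) i)) = v (θ ∘ s) + b (φ (θ i)) := e1
      have e2' : g (Fin.snoc ((φ ∘ θ) ∘ s') ((φ ∘ θ) i)) = v (θ ∘ s') + b (φ (θ i)) := e2
      rw [e1', e2', map_add, map_add] at h3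
      exact add_right_cancel h3
    obtain ⟨η, hη, v0, d, hd⟩ := ih _ hPv
    refine ⟨φ1 ∘ φ ∘ θ ∘ η, hφ1.comp (hφ.comp (hθ.comp hη)), v0,
      Fin.snoc (α := fun _ => ℕ → ℕ →₀ K) d (fun i => b (φ (θ (η i)))), fun s hs => ?_⟩
    have hi : StrictMono (Fin.init s) := fun a b hab => hs (by simpa using hab)
    have h1 := H (η ∘ Fin.init s) (η (s (Fin.last n))) (hη.comp hi)
      (fun k => hη (hs (Fin.castSucc_lt_last k)))
    have h2 := hd (Fin.init s) hi
    have e : s = Fin.snoc (Fin.init s) (s (Fin.last n)) := by simp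
    have e3 : g0 ((φ1 ∘ φ ∘ θ ∘ η) ∘ s) =
        g (Fin.snoc (φ ∘ θ ∘ η ∘ Fin.init s) (φ (θ (η (s (Fin.last n)))))) := by
      simp only [hgdef]
      congr 1
      rw [comp_snoc']
      conv_lhs => rw [e, comp_snoc']
      rfl
    rw [e3, h1, Fin.sum_univ_castSucc]
    have h2' : v (θ ∘ η ∘ Fin.init s) = v0 + ∑ k, d k (Fin.init s k) := h2
    rw [h2']
    simp [Fin.init, add_assoc]

end
end BohrAux

namespace BohrAux

section
variable {K : Type} [Field K] [Finite K]

noncomputable def EC (K : Type) [Field K] : Submodule K (ℕ → ℕ →₀ K) where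
  carrier := {N | ∃ c, ∀ᶠ i in atTop, N i = c}
  zero_mem' := ⟨0, Eventually.of_forall fun i => rfl⟩
  add_mem' := by
    rintro a b ⟨c, hc⟩ ⟨d, hd⟩
    refine ⟨c + d, ?_⟩
    filter_upwards [hc, hd] with i h1 h2
    rw [← h1, ← h2]; rfl
  smul_mem' := by
    rintro r a ⟨c, hc⟩
    refine ⟨r • c, ?_⟩
    filter_upwards [hc] with i h1
    rw [← h1]; rfl

lemma exists_tuple {n : ℕ} (P : Fin n → ℕ → Prop) (h : ∀ k, ∃ᶠ j in atTop, P k j) :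
    ∃ s : Fin n → ℕ, StrictMono s ∧ ∀ k, P k (s k) := by
  obtain ⟨φ, h1, h2⟩ := extraction_forall_of_frequently
    (P := fun m j => ∀ h : m < n, P ⟨m, h⟩ j) (fun m => by
      by_cases hm : m < n
      · exact (h ⟨m, hm⟩).mono fun j hj _ => hj
      · exact (Eventually.of_forall fun j h => absurd h hm).frequently)
  exact ⟨fun k => φ k, fun a b hab => h1 hab, fun k => h2 k k.2⟩

theorem core {p : ℕ} (hp : 1 < p) (hpK : (p : K) ≠ 0) (g : (Fin (p + p) → ℕ) → ℕ →₀ K)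
    (hQ : ∀ χ : (ℕ →₀ K) →ₗ[K] K, ∃ (κ : Type) (_ : Finite κ) (c : ℕ → κ) (r : K),
      ∀ (s : Fin (p + p) → ℕ) (S : Finset (Fin (p + p))) (A B : κ), S.card = p →
        (∀ k ∈ S, c (s k) = A) → (∀ k, k ∉ S → c (s k) = B) → χ (g s) = r) :
    ∃ s s' : Fin (p + p) → ℕ, StrictMono s ∧ StrictMono s' ∧ s ≠ s' ∧ g s = g s' := by
  classical
  obtain ⟨S0, -, hS0⟩ := Finset.exists_subset_card_eq
    (s := (Finset.univ : Finset (Fin (p + p)))) (n := p) (by simp)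
  have hPP : PP g := by
    intro χ
    obtain ⟨κ, hκ, c, r, h⟩ := hQ χ
    refine ⟨κ, hκ, c, 0, fun s s' _ _ l h1 h2 => ?_⟩
    rw [h s S0 l l hS0 (fun k _ => (h1 k).2) (fun k _ => (h1 k).2),
      h s' S0 l l hS0 (fun k _ => (h2 k).2) (fun k _ => (h2 k).2)]
  obtain ⟨φ, hφ, v0, d, hd⟩ := separated _ g hPP
  have hS : ∀ S : Finset (Fin (p + p)), S.card = p → ∑ k ∈ S, d k ∈ EC K := by
    intro S hSc
    apply ev_const
    intro χ
    obtain ⟨κ, hκ, c, r, h⟩ := hQ χ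
    let c' : ℕ → κ × (Fin (p + p) → K) := fun i => (c (φ i), fun k => χ (d k i))
    obtain ⟨M, hM⟩ := inf_colors c'
    have hij : ∀ i j, M ≤ i → M ≤ j →
        χ v0 + (∑ k ∈ S, χ (d k i) + ∑ k ∈ Sᶜ, χ (d k j)) = r := by
      intro i j hi hj
      obtain ⟨s, hs, hs2⟩ := exists_tuple (n := p + p)
        (fun k l => c' l = c' (if k ∈ S then i else j)) (fun k => by
          apply hM; split_ifs <;> assumption)
      have h1 := h (φ ∘ s) S (c (φ i)) (c (φ j)) hSc
        (fun k hk => by have := congrArg Prod.fst (hs2 k); rw [if_pos hk] at this; exact this)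
        (fun k hk => by have := congrArg Prod.fst (hs2 k); rw [if_neg hk] at this; exact this)
      rw [hd s hs, map_add, map_sum, ← Finset.sum_add_sum_compl S] at h1
      rw [← h1]
      congr 2
      · refine Finset.sum_congr rfl fun k hk => ?_
        have := congrFun (congrArg Prod.snd (hs2 k)) k
        rw [if_pos hk] at this; exact this.symm
      · refine Finset.sum_congr rfl fun k hk => ?_
        have := congrFun (congrArg Prod.snd (hs2 k)) k
        rw [if_neg (Finset.mem_compl.1 hk)] at this; exact this.symm
    refine ⟨∑ k ∈ S, χ (d k M), eventually_atTop.2 ⟨M, fun i hi => ?_⟩⟩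
    have h1 := hij i M hi le_rfl
    have h2 := hij M M le_rfl le_rfl
    rw [Finset.sum_apply, map_sum]
    exact add_right_cancel (add_left_cancel (h1.trans h2.symm))
  have hdiff : ∀ k l, d k - d l ∈ EC K := by
    intro k l
    by_cases hkl : k = l
    · rw [hkl, sub_self]; exact Submodule.zero_mem _
    obtain ⟨T, hT, hTc⟩ := Finset.exists_subset_card_eq
      (s := (Finset.univ \ {k, l} : Finset (Fin (p + p)))) (n := p - 1) (by
        rw [Finset.card_sdiff_of_subset (Finset.subset_univ _), Finset.card_pair hkl]
        simp; omega)
    have hk : k ∉ T := fun h => by have := hT h; simp at this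
    have hl : l ∉ T := fun h => by have := hT h; simp at this
    have h1 := hS (insert k T) (by rw [Finset.card_insert_of_notMem hk]; omega)
    have h2 := hS (insert l T) (by rw [Finset.card_insert_of_notMem hl]; omega)
    rw [Finset.sum_insert hk] at h1
    rw [Finset.sum_insert hl] at h2
    have := (EC K).sub_mem h1 h2
    rwa [add_sub_add_right_eq_sub] at this
  have hall : ∀ k, d k ∈ EC K := by
    intro k
    have h1 : ∑ l ∈ S0, (d l - d k) ∈ EC K := (EC K).sum_mem fun l _ => hdiff l k
    have h2 := (EC K).sub_mem (hS S0 hS0) h1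
    rw [Finset.sum_sub_distrib, Finset.sum_const, hS0, sub_sub_cancel, ← Nat.cast_smul_eq_nsmul K] at h2
    have h3 := (EC K).smul_mem (p : K)⁻¹ h2
    rwa [smul_smul, inv_mul_cancel₀ hpK, one_smul] at h3
  choose cc hcc using hall
  have hcc' : ∀ᶠ i in atTop, ∀ k, d k i = cc k := by
    rw [eventually_all]; exact hcc
  obtain ⟨M, hM⟩ := eventually_atTop.1 hcc'
  let s : ℕ → Fin (p + p) → ℕ := fun a k => M + a + k
  have hs : ∀ a, StrictMono (s a) := fun a x y hxy => by
    have : (x : ℕ) < y := hxy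
    simp only [s]; omega
  have hval : ∀ a, g (φ ∘ s a) = v0 + ∑ k, cc k := by
    intro a
    rw [hd _ (hs a)]
    congr 1
    exact Finset.sum_congr rfl fun k _ => hM _ (by simp only [s]; omega) k
  refine ⟨φ ∘ s 0, φ ∘ s 1, hφ.comp (hs 0), hφ.comp (hs 1), fun h => ?_, by rw [hval, hval]⟩
  have := hφ.injective (congrFun h ⟨0, by omega⟩)
  simp [s] at this

end

lemma open_fiber {q : ℕ} [Fact q.Prime] (χ : (ℕ →₀ ZMod q) →ₗ[ZMod q] ZMod q) (r : ZMod q) :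
    IsOpen[bohrTopology (ℕ →₀ ZMod q)] {y | χ y = r} := by
  let ψ : (ℕ →₀ ZMod q) →+ AddCircle (1 : ℝ) := (ZMod.toAddCircle (N := q)).comp χ.toAddMonoidHom
  have h1 : IsOpen[TopologicalSpace.induced ψ inferInstance] {y | χ y = r} := by
    rw [isOpen_induced_iff]
    refine ⟨(ZMod.toAddCircle '' {a : ZMod q | a ≠ r})ᶜ, ?_, ?_⟩
    · exact (Set.toFinite _).isClosed.isOpen_compl
    · ext y
      simp [ψ, ZMod.toAddCircle_inj]
  exact (iInf_le (fun χ : (ℕ →₀ ZMod q) →+ AddCircle (1 : ℝ) => 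
    TopologicalSpace.induced χ inferInstance) ψ) _ h1

lemma open_nhd {G : Type} [AddCommGroup G] (O : Set G) (hO : IsOpen[bohrTopology G] O) (h0 : 0 ∈ O) :
    ∃ I : Set (G →+ AddCircle (1 : ℝ)), I.Finite ∧ ∀ x, (∀ χ ∈ I, χ x = 0) → x ∈ O := by
  have h1 : O ∈ @nhds G (bohrTopology G) 0 := 
    by
    letI := bohrTopology G
    exact IsOpen.mem_nhds hO h0
  rw [bohrTopology, nhds_iInf, Filter.mem_iInf] at h1
  obtain ⟨I, hI, V, hV, rfl⟩ := h1
  refine ⟨I, hI, fun x hx => ?_⟩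
  rw [Set.mem_iInter]
  intro i
  have := hV i
  rw [nhds_induced, Filter.mem_comap] at this
  obtain ⟨t, ht, hts⟩ := this
  apply hts
  rw [Set.mem_preimage, hx i.1 i.2, ← map_zero i.1]
  exact mem_of_mem_nhds ht

/-- Sum of basis vectors. -/
noncomputable def xs (p : ℕ) {n : ℕ} (s : Fin n → ℕ) : ℕ →₀ ZMod p :=
  ∑ k, Finsupp.single (s k) 1

lemma xs_inj {p : ℕ} (hp : 1 < p) {n : ℕ} {s s' : Fin n → ℕ} (hs : StrictMono s) (hs' : StrictMono s')
    (h : xs p s = xs p s') : s = s' := by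
  have : Fact (1 < p) := ⟨hp⟩
  have key : ∀ s : Fin n → ℕ, StrictMono s → ∀ j, xs p s j ≠ 0 ↔ j ∈ Set.range s := by
    intro s hs j
    constructor
    · intro hj
      by_contra hn
      apply hj
      rw [xs, Finsupp.finsetSum_apply]
      refine Finset.sum_eq_zero fun k _ => ?_
      rw [Finsupp.single_apply, if_neg fun h => hn ⟨k, h⟩]
    · rintro ⟨k, rfl⟩
      rw [xs, Finsupp.finsetSum_apply, Finset.sum_eq_single k]
      · simp
      · intro b _ hb
        rw [Finsupp.single_apply, if_neg fun h => hb (hs.injective h)]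
      · simp
  apply (hs.range_inj hs').1
  ext j
  rw [← key s hs, ← key s' hs', h]

end BohrAux

end

/-- (Kunen) For distinct primes `p ≠ q`, the spaces `(⊕_ω ℤ/pℤ)^#` and `(⊕_ω ℤ/qℤ)^#`
are not homeomorphic. -/
theorem bohr_directSum_primes_not_homeomorphic (p q : ℕ) (hp : p.Prime) (hq : q.Prime)
    (hpq : p ≠ q) :
    letI := bohrTopology (ℕ →₀ ZMod p)
    letI := bohrTopology (ℕ →₀ ZMod q)
    IsEmpty ((ℕ →₀ ZMod p) ≃ₜ (ℕ →₀ ZMod q)) := by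
  letI τp := bohrTopology (ℕ →₀ ZMod p)
  letI τq := bohrTopology (ℕ →₀ ZMod q)
  refine ⟨fun f => ?_⟩
  have : Fact q.Prime := ⟨hq⟩
  have hpK : (p : ZMod q) ≠ 0 := by
    intro h
    rw [ZMod.natCast_eq_zero_iff] at h
    exact hpq ((Nat.prime_dvd_prime_iff_eq hq hp).1 h).symm
  obtain ⟨s, s', hs, hs', hne, heq⟩ := BohrAux.core (K := ZMod q) hp.one_lt hpK
    (fun s => f (BohrAux.xs p s)) (by
      intro χ
      have hO : IsOpen (f ⁻¹' {y | χ y = χ (f 0)}) :=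
        (BohrAux.open_fiber χ (χ (f 0))).preimage f.continuous
      obtain ⟨I, hI, H⟩ := BohrAux.open_nhd _ hO rfl
      have : Finite I := hI
      have hfin : Finite {u : AddCircle (1 : ℝ) | p • u = 0} := 
        AddCircle.finite_torsion (1 : ℝ) hp.pos
      have hone : ∀ i : ℕ, p • (Finsupp.single i (1 : ZMod p)) = 0 := by
        intro i; rw [Finsupp.smul_single]; simp
      refine ⟨I → {u : AddCircle (1 : ℝ) | p • u = 0}, inferInstance,
        fun i χ => ⟨χ.1 (Finsupp.single i 1), by
          rw [Set.mem_ofPred_eq, ← map_nsmul, hone, map_zero]⟩, χ (f 0), ?_⟩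
      intro s S A B hS hA hB
      refine H _ fun ψ hψ => ?_
      have hA' : ∀ k ∈ S, ψ (Finsupp.single (s k) 1) = (A ⟨ψ, hψ⟩ : AddCircle (1 : ℝ)) := 
        fun k hk => by rw [← hA k hk]
      have hB' : ∀ k ∈ Sᶜ, ψ (Finsupp.single (s k) 1) = (B ⟨ψ, hψ⟩ : AddCircle (1 : ℝ)) := 
        fun k hk => by rw [← hB k (Finset.mem_compl.1 hk)]
      rw [BohrAux.xs, map_sum, ← Finset.sum_add_sum_compl S, Finset.sum_congr rfl hA',
        Finset.sum_congr rfl hB', Finset.sum_const, Finset.sum_const, Finset.card_compl, hS,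
        Fintype.card_fin, Nat.add_sub_cancel, (A ⟨ψ, hψ⟩).2, (B ⟨ψ, hψ⟩).2, add_zero])
  exact hne (BohrAux.xs_inj hp.one_lt hs hs' (f.injective heq))
end
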